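/- arXiv:1403.6385 — 3 statements merged into one kernel-verified Lean document; each statement's English description precedes it below -/
import Mathlib

section
/- Assume the additive-noise setting, let c, β ∈ [0,∞) and assume that x·μ(x) ≤ c(1+x²) for all x ∈ (0,∞). Then for every t ∈ [0,T] it holds that E[ exp( (1+(X_t)²)/e^{2t(c+1)+tβ} + ∫_0^t β(1+(X_s)²)/e^{2s(c+1)+sβ} ds ) ] ≤ E[ exp(1+(X_0)²) ]. -/
open MeasureTheory ProbabilityTheory Filter Set
open scoped ENNReal NNReal
noncomputable section

lemma gauss_aux (a h x : ℝ) (ha0 : 0 ≤ a) (ha1 : a ≤ 1) (hh : 0 < h) (hh4 : h ≤ 1/4) :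
    ∫⁻ w, ENNReal.ofReal (Real.exp (2*a*x*w + a*w^2 - 2*a*h*(1+4*h)*(1+x^2)))
      ∂(gaussianReal 0 (Real.toNNReal h)) ≤ 1 := by
  have hah : a * h ≤ 1/4 := by nlinarith
  have hah0 : 0 ≤ a * h := by positivity
  have hd : 0 < 1 - 2*a*h := by nlinarith
  set h' := h / (1 - 2*a*h) with hh'
  have hh'0 : 0 < h' := by positivity
  have hv : Real.toNNReal h ≠ 0 := by simpa using hh
  have hv' : Real.toNNReal h' ≠ 0 := by simpa using hh'0
  rw [gaussianReal_of_var_ne_zero _ hv,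
    lintegral_withDensity_eq_lintegral_mul _ (measurable_gaussianPDF _ _) (by fun_prop)]
  rw [← lintegral_gaussianPDF_eq_one (2*a*x*h') hv']
  apply lintegral_mono
  intro w
  simp only [Pi.mul_apply, gaussianPDF]
  rw [← ENNReal.ofReal_mul (gaussianPDFReal_nonneg _ _ _)]
  apply ENNReal.ofReal_le_ofReal
  simp only [gaussianPDFReal, Real.coe_toNNReal _ hh.le, Real.coe_toNNReal _ hh'0.le]
  have hs : Real.sqrt (2*Real.pi*h) = Real.sqrt (2*Real.pi*h') * Real.sqrt (1-2*a*h) := by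
    rw [← Real.sqrt_mul (by positivity)]
    congr 1
    rw [hh', mul_assoc (2*Real.pi), div_mul_cancel₀ _ hd.ne']
  have hsq : (Real.sqrt (1-2*a*h))⁻¹ ≤ Real.exp (2*a*h) := by
    rw [inv_le_comm₀ (by positivity) (Real.exp_pos _), ← Real.exp_neg]
    apply Real.le_sqrt_of_sq_le
    rw [← Real.exp_nat_mul]
    have h1 : Real.exp (((2:ℕ):ℝ) * -(2*a*h)) ≤ 1 / (1 + 4*(a*h)) := by
      rw [show ((2:ℕ):ℝ) * -(2*a*h) = -(4*(a*h)) by push_cast; ring, Real.exp_neg, one_div]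
      apply inv_anti₀ (by positivity)
      linarith [Real.add_one_le_exp (4*(a*h))]
    refine h1.trans ?_
    rw [div_le_iff₀ (by positivity)]
    nlinarith
  have hh'le : h' ≤ h * (1+4*h) := by
    rw [hh', div_le_iff₀ hd]
    have : 1 ≤ (1+4*h)*(1-2*a*h) := by
      have : a*h ≤ h := by nlinarith
      nlinarith
    nlinarith
  have hexp : 2*a*x*w + a*w^2 - 2*a*h*(1+4*h)*(1+x^2) - (w-0)^2/(2*h)
      ≤ -(w - 2*a*x*h')^2/(2*h') - 2*a*h := by
    have e1 : -(w - 2*a*x*h')^2/(2*h') = -w^2/(2*h') + 2*a*x*w - 2*a^2*x^2*h' := by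
      field_simp; ring
    have e2 : -w^2/(2*h') = a*w^2 - w^2/(2*h) := by
      rw [hh']; field_simp; ring
    have e3 : 2*a^2*x^2*h' ≤ 2*a*x^2*(h*(1+4*h)) := by
      have : a^2*h' ≤ a*(h*(1+4*h)) := by
        have : a^2 ≤ a := by nlinarith
        exact mul_le_mul this hh'le hh'0.le ha0
      nlinarith [sq_nonneg x]
    rw [e1, e2]
    have : 0 ≤ a*h*h := by positivity
    have k : 2*a*x*w + a*w^2 - w^2/(2*h) - 2*a^2*x^2*h' - 2*a*h
      - (2*a*x*w + a*w^2 - 2*a*h*(1+4*h)*(1+x^2) - w^2/(2*h)) 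
      = 2*a*x^2*(h*(1+4*h)) + 8*(a*h*h) - 2*a^2*x^2*h' := by ring
    have k2 : (w-0)^2 = w^2 := by ring
    rw [k2]
    linarith
  rw [hs, mul_inv, mul_assoc, mul_assoc]
  apply mul_le_mul_of_nonneg_left _ (by positivity)
  rw [← Real.exp_add]
  calc _ ≤ Real.exp (2*a*h) * Real.exp (-(w - 2*a*x*h')^2/(2*h') - 2*a*h) := by
        apply mul_le_mul hsq _ (Real.exp_pos _).le (Real.exp_pos _).le
        apply Real.exp_le_exp.2
        refine le_trans (le_of_eq ?_) hexp
        ring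
    _ = _ := by rw [← Real.exp_add]; congr 1; ring

lemma step_aux {Ω : Type*} (m : MeasurableSpace Ω) [mΩ : MeasurableSpace Ω] (P : Measure Ω)
    [IsProbabilityMeasure P] (hm : m ≤ mΩ) (G : Ω → ℝ≥0∞) (hG : Measurable[m] G)
    (x w : Ω → ℝ) (hx : Measurable[m] x) (hw : Measurable w)
    (hind : Indep (MeasurableSpace.comap w inferInstance) m P)
    (a h : ℝ) (ha0 : 0 ≤ a) (ha1 : a ≤ 1) (hh : 0 < h) (hh4 : h ≤ 1/4)
    (hlaw : Measure.map w P = gaussianReal 0 (Real.toNNReal h)) :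
    ∫⁻ ω, G ω * ENNReal.ofReal (Real.exp (2*a*x ω*w ω + a*(w ω)^2 - 2*a*h*(1+4*h)*(1+(x ω)^2))) ∂P
      ≤ ∫⁻ ω, G ω ∂P := by
  have hp : Measurable[m] (fun ω => (G ω, x ω)) := hG.prodMk hx
  have hp' : Measurable (fun ω => (G ω, x ω)) := hp.mono hm le_rfl
  have hI : IndepFun (fun ω => (G ω, x ω)) w P := by
    rw [IndepFun_iff_Indep]
    exact (indep_of_indep_of_le_right hind hp.comap_le).symm
  have hmap := (indepFun_iff_map_prod_eq_prod_map_map hp'.aemeasurable hw.aemeasurable).1 hI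
  have hφ : Measurable (fun z : (ℝ≥0∞ × ℝ) × ℝ => z.1.1 * ENNReal.ofReal (Real.exp
      (2*a*z.1.2*z.2 + a*z.2^2 - 2*a*h*(1+4*h)*(1+z.1.2^2)))) := by fun_prop
  have := lintegral_map (μ := P) hφ (hp'.prodMk hw)
  rw [← this, hmap, lintegral_prod _ hφ.aemeasurable, lintegral_map hφ.lintegral_prod_right' hp']
  apply lintegral_mono
  intro ω
  dsimp only
  rw [lintegral_const_mul _ (by fun_prop), hlaw]
  calc _ ≤ G ω * 1 := by gcongr; exact gauss_aux a h (x ω) ha0 ha1 hh hh4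
    _ = _ := mul_one _

/-- Deterministic one-step estimate. -/
lemma path_step (a : ℝ → ℝ) (c β κ : ℝ) (hc : 0 ≤ c) (hβ : 0 ≤ β) (hκ : κ = 2*(c+1)+β)
    (ha : ∀ s, a s = Real.exp (-(κ*s)))
    (x w m : ℝ → ℝ) (p h δ K : ℝ) (hp : 0 ≤ p) (hh : 0 < h)
    (hxc : ContinuousOn x (Icc p (p+h)))
    (hm : IntervalIntegrable m volume p (p+h))
    (hxm : ∀ s ∈ Icc p (p+h), x s * m s ≤ c * (1 + x s^2))
    (hδ0 : 0 ≤ δ)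
    (hδx : ∀ s ∈ Icc p (p+h), |x s - x p| ≤ δ)
    (hδw : |w (p+h) - w p| ≤ δ)
    (hδV : ∀ s ∈ Icc p (p+h), |x s^2 - x p^2| ≤ δ)
    (hK : ∀ s ∈ Icc p (p+h), 1 + x s^2 ≤ K)
    (hsde : x (p+h) - x p = (∫ s in p..(p+h), m s) + (w (p+h) - w p)) :
    a (p+h) * (1 + x (p+h)^2) - a p * (1 + x p^2) + (∫ s in p..(p+h), β * (1 + x s^2) * a s)
     ≤ (2*a p*x p*(w (p+h) - w p) + a p*(w (p+h) - w p)^2 - 2*a p*h*(1+4*h)*(1+x p^2))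
       + (4 * δ * (∫ s in p..(p+h), |m s|) + h * (2*κ*δ + (κ^2+8)*h*K)) := by
  have hle : p ≤ p + h := by linarith
  have hκ0 : 0 ≤ κ := by rw [hκ]; positivity
  have hap0 : 0 < a p := by rw [ha]; positivity
  have hap1 : a p ≤ 1 := by
    rw [ha]; apply Real.exp_le_one_iff.2; nlinarith [mul_nonneg hκ0 hp]
  have hacont : Continuous a := by
    rw [show a = fun s => Real.exp (-(κ*s)) from funext ha]; fun_prop
  have hpmem : p ∈ Icc p (p+h) := ⟨le_rfl, hle⟩
  have hqmem : p+h ∈ Icc p (p+h) := ⟨hle, le_rfl⟩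
  set Vp := 1 + x p^2 with hVp
  have hVp1 : 1 ≤ Vp := by rw [hVp]; nlinarith [sq_nonneg (x p)]
  have hVpK : Vp ≤ K := hK p hpmem
  set A := ∫ s in p..(p+h), m s with hA
  set B := ∫ s in p..(p+h), |m s| with hB
  set dw := w (p+h) - w p with hdw
  have hAB : |A| ≤ B := intervalIntegral.abs_integral_le_integral_abs hle
  have hxcI : ContinuousOn x (uIcc p (p+h)) := by rwa [uIcc_of_le hle]
  have hVi : IntervalIntegrable (fun s => 1 + x s^2) volume p (p+h) :=
    (continuousOn_const.add (hxcI.pow 2)).intervalIntegrable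
  -- bound on ∫ V
  have hVint : (∫ s in p..(p+h), c * (1 + x s^2)) ≤ c*h*(Vp+δ) := by
    have : (∫ s in p..(p+h), c * (1 + x s^2)) ≤ ∫ s in p..(p+h), c*(Vp+δ) := by
      apply intervalIntegral.integral_mono_on hle (hVi.const_mul c) (by simp)
      intro s hs
      have := (abs_le.1 (hδV s hs)).2
      exact mul_le_mul_of_nonneg_left (by rw [hVp]; linarith) hc
    refine this.trans (le_of_eq ?_)
    rw [intervalIntegral.integral_const]; simp; ring
  have hβint : (∫ s in p..(p+h), β * (1 + x s^2) * a s) ≤ β*h*(Vp+δ)*a p := by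
    have : (∫ s in p..(p+h), β * (1 + x s^2) * a s) ≤ ∫ s in p..(p+h), β*(Vp+δ)*a p := by
      apply intervalIntegral.integral_mono_on hle
        (((continuousOn_const.mul (continuousOn_const.add (hxcI.pow 2))).mul
          hacont.continuousOn).intervalIntegrable) (by simp)
      intro s hs
      have := (abs_le.1 (hδV s hs)).2
      have h2 : a s ≤ a p := by
        rw [ha, ha]; apply Real.exp_le_exp.2; nlinarith [hs.1]
      have h3 : 0 < a s := by rw [ha]; positivity
      have h4 : 1 + x s^2 ≤ Vp + δ := by rw [hVp]; linarith
      have h5 : 0 ≤ 1 + x s^2 := by positivity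
      exact mul_le_mul (mul_le_mul_of_nonneg_left h4 hβ) h2 h3.le
        (mul_nonneg hβ (h5.trans h4))
    refine this.trans (le_of_eq ?_)
    rw [intervalIntegral.integral_const]; simp; ring
  -- drift
  have hxA : x p * A ≤ c*h*(Vp+δ) + δ * B := by
    have : x p * A ≤ (∫ s in p..(p+h), c * (1 + x s^2)) + δ * B := by
      rw [hA, hB, ← intervalIntegral.integral_const_mul, ← intervalIntegral.integral_const_mul,
        ← intervalIntegral.integral_add (hVi.const_mul c) (hm.abs.const_mul δ)]
      apply intervalIntegral.integral_mono_on hle (hm.const_mul _)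
        ((hVi.const_mul c).add (hm.abs.const_mul δ))
      intro s hs
      have h1 := hxm s hs
      have h2 : (x p - x s) * m s ≤ δ * |m s| := by
        calc _ ≤ |(x p - x s) * m s| := le_abs_self _
          _ = |x s - x p| * |m s| := by rw [abs_mul, abs_sub_comm]
          _ ≤ _ := by gcongr; exact hδx s hs
      linarith
    linarith
  have hA2 : A * (2*dw + A) ≤ 2*δ*B := by
    have e : 2*dw + A = dw + (x (p+h) - x p) := by rw [hsde]; ring
    have : |2*dw+A| ≤ 2*δ := by
      rw [e]; refine (abs_add_le _ _).trans ?_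
      linarith [hδx _ hqmem]
    calc _ ≤ |A * (2*dw+A)| := le_abs_self _
      _ = |A| * |2*dw+A| := abs_mul _ _
      _ ≤ B * (2*δ) := by gcongr; exact (abs_nonneg _).trans hAB
      _ = _ := by ring
  have hB0 : 0 ≤ B := (abs_nonneg _).trans hAB
  -- decay of a
  have hyy : 0 ≤ κ*h := by positivity
  have haq : a (p+h) ≤ a p * (1 - κ*h + (κ*h)^2) := by
    have : a (p+h) = a p * Real.exp (-(κ*h)) := by
      rw [ha, ha, ← Real.exp_add]; congr 1; ring
    rw [this]; gcongr
    have h1 : Real.exp (-(κ*h)) ≤ 1 / (1 + κ*h) := by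
      rw [Real.exp_neg, one_div]
      apply inv_anti₀ (by positivity)
      linarith [Real.add_one_le_exp (κ*h)]
    refine h1.trans ?_
    rw [div_le_iff₀ (by positivity)]
    have : 0 ≤ (κ*h)^3 := by positivity
    nlinarith
  set Vq := 1 + x (p+h)^2 with hVq
  have hVq0 : 0 ≤ Vq := by positivity
  have hVqK : Vq ≤ K := hK _ hqmem
  have hVqp : Vp - δ ≤ Vq := by
    have := (abs_le.1 (hδV _ hqmem)).1
    rw [hVp, hVq]; linarith
  have hVexp : Vq - Vp = 2*x p*A + 2*x p*dw + dw^2 + A*(2*dw+A) := by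
    have : x (p+h) = x p + (A + dw) := by linarith
    rw [hVq, hVp, this]; ring
  have t1 : (a (p+h) - a p) * Vq ≤ a p * (κ^2*h*h*K - κ*h*(Vp-δ)) := by
    calc _ ≤ (a p * (- (κ*h) + (κ*h)^2)) * Vq := by gcongr; linarith
      _ = a p * ((κ*h)^2*Vq - κ*h*Vq) := by ring
      _ ≤ a p * ((κ*h)^2*K - κ*h*(Vp-δ)) := by gcongr
      _ = _ := by ring
  have t2 : a p * (2*(x p * A) + A*(2*dw+A)) ≤ a p * (2*(c*h*(Vp+δ) + δ*B) + 2*δ*B) := by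
    gcongr
  have key : a (p+h) * Vq - a p * Vp = (a (p+h) - a p)*Vq + a p * (2*(x p*A) + A*(2*dw+A))
      + (2*a p*x p*dw + a p*dw^2) := by
    have : a p * (Vq - Vp) = a p * (2*x p*A + 2*x p*dw + dw^2 + A*(2*dw+A)) := by rw [hVexp]
    linarith
  have t3 : a p * (4*δ*B + h*(2*κ*δ - 2*δ + (κ^2+8)*h*K)) ≤ 4*δ*B + h*(2*κ*δ + (κ^2+8)*h*K) := by
    have hK0 : 0 ≤ K := by linarith
    have n1 : 0 ≤ 4*δ*B := by positivity
    have n2 : 0 ≤ h*(2*κ*δ + (κ^2+8)*h*K) := by positivity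
    have n3 : 0 ≤ a p * (h * (2*δ)) := by positivity
    nlinarith
  have t4 : a p * (h*(8*h*Vp)) ≤ a p * (h*(8*h*K)) := by gcongr
  rw [key]
  have fin : a p * (κ^2*h*h*K - κ*h*(Vp-δ)) + a p * (2*(c*h*(Vp+δ) + δ*B) + 2*δ*B)
      + β*h*(Vp+δ)*a p + 2*a p*h*(1+4*h)*Vp
      = a p * (4*δ*B + h*(2*κ*δ - 2*δ + (κ^2+8)*h*K)) + (a p * (h*(8*h*Vp)) - a p * (h*(8*h*K))) := by
    rw [hκ]; ring
  linarith

/-- Deterministic limit estimate along uniform grids. -/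
lemma path_limit (a : ℝ → ℝ) (c β κ : ℝ) (hc : 0 ≤ c) (hβ : 0 ≤ β) (hκ : κ = 2*(c+1)+β)
    (ha : ∀ s, a s = Real.exp (-(κ*s)))
    (x w m : ℝ → ℝ) (t : ℝ) (ht : 0 < t)
    (hxc : ContinuousOn x (Icc 0 t)) (hwc : ContinuousOn w (Icc 0 t))
    (hw0 : w 0 = 0)
    (hm : IntervalIntegrable m volume 0 t)
    (hxm : ∀ s ∈ Icc 0 t, x s * m s ≤ c * (1 + x s^2))
    (hsde : ∀ n k : ℕ, k ≤ n+1 → x (k * (t/(n+1))) =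
      x 0 + (∫ s in (0:ℝ)..(k * (t/(n+1))), m s) + w (k * (t/(n+1))))
    (ε : ℝ) (hε : 0 < ε) :
    ∀ᶠ n : ℕ in atTop,
      a t * (1 + x t^2) + (∫ s in (0:ℝ)..t, β * (1 + x s^2) * a s) - ε
       ≤ (1 + x 0^2) + ∑ k ∈ Finset.range (n+1),
         (2*a (k * (t/(n+1)))*x (k * (t/(n+1)))*(w (((k+1:ℕ):ℝ) * (t/(n+1))) - w (k * (t/(n+1))))
          + a (k * (t/(n+1)))*(w (((k+1:ℕ):ℝ) * (t/(n+1))) - w (k * (t/(n+1))))^2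
          - 2*a (k * (t/(n+1)))*(t/(n+1))*(1+4*(t/(n+1)))*(1+x (k * (t/(n+1)))^2)) := by
  have hκ0 : 0 ≤ κ := by rw [hκ]; positivity
  obtain ⟨K, hK⟩ := (isCompact_Icc (a := (0:ℝ)) (b := t)).bddAbove_image
    ((continuousOn_const (c := (1:ℝ))).add (hxc.pow 2))
  have hK : ∀ s ∈ Icc 0 t, 1 + x s^2 ≤ K := fun s hs => hK (mem_image_of_mem _ hs)
  have hK0 : 0 ≤ K := le_trans (by positivity) (hK 0 ⟨le_rfl, ht.le⟩)
  set B := ∫ s in (0:ℝ)..t, |m s| with hB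
  have hB0 : 0 ≤ B := intervalIntegral.integral_nonneg ht.le (fun _ _ => abs_nonneg _)
  set δ := ε / (2*(4*B+2*κ*t+1)) with hδ
  have hδ0 : 0 < δ := by positivity
  have huc : ∀ f : ℝ → ℝ, ContinuousOn f (Icc 0 t) → ∃ ρ > 0, ∀ r ∈ Icc 0 t, ∀ s ∈ Icc 0 t,
      |r - s| < ρ → |f r - f s| ≤ δ := by
    intro f hf
    obtain ⟨ρ, h0, h1⟩ := Metric.uniformContinuousOn_iff.1
      (isCompact_Icc.uniformContinuousOn_of_continuous hf) δ hδ0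
    exact ⟨ρ, h0, fun r hr s hs h => (h1 r hr s hs h).le⟩
  obtain ⟨ρ1, hρ1, h1⟩ := huc x hxc
  obtain ⟨ρ2, hρ2, h2⟩ := huc w hwc
  obtain ⟨ρ3, hρ3, h3⟩ := huc (fun s => x s^2) (hxc.pow 2)
  have hlim : Tendsto (fun n : ℕ => t / ((n:ℝ)+1)) atTop (nhds 0) := by
    have := (tendsto_one_div_add_atTop_nhds_zero_nat (𝕜 := ℝ)).const_mul t
    simpa [div_eq_mul_inv] using this
  have hlim2 : Tendsto (fun n : ℕ => t * ((κ^2+8)*(t / ((n:ℝ)+1))*K)) atTop (nhds 0) := by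
    have := ((hlim.const_mul (κ^2+8)).mul_const K).const_mul t
    simpa using this
  filter_upwards [hlim.eventually_lt_const hρ1, hlim.eventually_lt_const hρ2,
    hlim.eventually_lt_const hρ3, hlim2.eventually_lt_const (half_pos hε)] with n e1 e2 e3 e4
  have hsde := hsde n
  set h := t / ((n:ℝ)+1) with hh
  have hh0 : 0 < h := by positivity
  have hnh : ((n+1:ℕ):ℝ) * h = t := by rw [hh]; push_cast; field_simp
  have hsub : ∀ k : ℕ, k ≤ n+1 → (k:ℝ)*h ≤ t := by
    intro k hk
    rw [← hnh]
    have : (k:ℝ) ≤ ((n+1:ℕ):ℝ) := by exact_mod_cast hk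
    gcongr
  have hg : ContinuousOn (fun s => β * (1 + x s^2) * a s) (Icc 0 t) := by
    have hacont : Continuous a := by
      rw [show a = fun s => Real.exp (-(κ*s)) from funext ha]; fun_prop
    exact (continuousOn_const.mul (continuousOn_const.add (hxc.pow 2))).mul hacont.continuousOn
  have hgi : IntervalIntegrable (fun s => β * (1 + x s^2) * a s) volume 0 t := by
    apply ContinuousOn.intervalIntegrable; rwa [uIcc_of_le ht.le]
  have sub : ∀ f : ℝ → ℝ, IntervalIntegrable f volume 0 t → ∀ p q, 0 ≤ p → p ≤ q → q ≤ t →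
      IntervalIntegrable f volume p q := by
    intro f hf p q h0 hpq hq
    apply hf.mono_set
    rw [uIcc_of_le hpq, uIcc_of_le ht.le]
    exact Icc_subset_Icc h0 hq
  have ind : ∀ k : ℕ, k ≤ n+1 →
      a (k*h) * (1 + x (k*h)^2) + (∫ s in (0:ℝ)..(k*h), β * (1 + x s^2) * a s)
       ≤ (1 + x 0^2) + ∑ k ∈ Finset.range k,
         (2*a (k * h)*x (k * h)*(w (((k+1:ℕ):ℝ) * h) - w (k * h))
          + a (k * h)*(w (((k+1:ℕ):ℝ) * h) - w (k * h))^2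
          - 2*a (k * h)*h*(1+4*h)*(1+x (k * h)^2))
        + (4*δ*(∫ s in (0:ℝ)..(k*h), |m s|) + k*(h * (2*κ*δ + (κ^2+8)*h*K))) := by
    intro k
    induction k with
    | zero => intro _; simp [ha]
    | succ k ih =>
      intro hk
      have ihk := ih (by omega)
      have hq := hsub (k+1) hk
      have hp0 : 0 ≤ (k:ℝ)*h := by positivity
      have hpq : ((k+1:ℕ):ℝ)*h = k*h + h := by push_cast; ring
      have s1 := hsde k (by omega)
      have s2 := hsde (k+1) hk
      rw [Finset.sum_range_succ]
      rw [hpq] at hq s2 ⊢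
      have hle : (k:ℝ)*h ≤ k*h+h := by linarith
      have hpt : (k:ℝ)*h ≤ t := by linarith
      have hIcc : Icc ((k:ℝ)*h) (k*h+h) ⊆ Icc 0 t := Icc_subset_Icc hp0 hq
      have hpm : (k:ℝ)*h ∈ Icc 0 t := hIcc ⟨le_rfl, hle⟩
      have hqm : (k:ℝ)*h+h ∈ Icc 0 t := hIcc ⟨hle, le_rfl⟩
      have hd : ∀ s ∈ Icc ((k:ℝ)*h) (k*h+h), |s - k*h| ≤ h := by
        intro s hs; rw [abs_le]; constructor <;> linarith [hs.1, hs.2]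
      have i1 := intervalIntegral.integral_add_adjacent_intervals
        (sub m hm 0 _ le_rfl hp0 hpt) (sub m hm _ _ hp0 hle hq)
      have i2 := intervalIntegral.integral_add_adjacent_intervals
        (sub _ hm.abs 0 _ le_rfl hp0 hpt) (sub _ hm.abs _ _ hp0 hle hq)
      have i3 := intervalIntegral.integral_add_adjacent_intervals
        (sub _ hgi 0 _ le_rfl hp0 hpt) (sub _ hgi _ _ hp0 hle hq)
      have st := path_step a c β κ hc hβ hκ ha x w m (k*h) h δ K hp0 hh0 (hxc.mono hIcc)
        (sub m hm _ _ hp0 hle hq) (fun s hs => hxm s (hIcc hs)) hδ0.le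
        (fun s hs => h1 s (hIcc hs) _ hpm ((hd s hs).trans_lt e1))
        (h2 _ hqm _ hpm ((hd _ ⟨hle, le_rfl⟩).trans_lt e2))
        (fun s hs => h3 s (hIcc hs) _ hpm ((hd s hs).trans_lt e3))
        (fun s hs => hK s (hIcc hs)) (by rw [s1, s2, ← i1]; ring)
      rw [← i2, ← i3]
      rw [show ((k+1:ℕ):ℝ) = (k:ℝ)+1 from Nat.cast_succ k]
      linarith
  have fin := ind (n+1) le_rfl
  rw [hnh, ← hB] at fin
  have e5 : ((n+1:ℕ):ℝ) * (h * (2*κ*δ + (κ^2+8)*h*K)) = t*(2*κ*δ) + t*((κ^2+8)*h*K) := by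
    rw [← mul_assoc, hnh]; ring
  rw [e5] at fin
  have e6 : 4*δ*B + t*(2*κ*δ) ≤ ε/2 := by
    have : δ * (4*B+2*κ*t+1) = ε/2 := by rw [hδ]; field_simp
    nlinarith
  linarith

theorem exponential_moment_bound_for_additive_noise_processes
    {Ω : Type*} [MeasurableSpace Ω] (P : Measure Ω) [IsProbabilityMeasure P]
    (T : ℝ) (hT : 0 ≤ T)
    (F : ℝ → MeasurableSpace Ω)
    (hF_mono : ∀ s t : ℝ, s ≤ t → F s ≤ F t)
    (hF_le : ∀ t : ℝ, F t ≤ (inferInstance : MeasurableSpace Ω))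
    (μ : ℝ → ℝ) (hμmeas : Measurable μ)
    (W X : ℝ → Ω → ℝ)
    (hW0 : ∀ ω, W 0 ω = 0)
    (hWadapt : ∀ t ∈ Set.Icc (0:ℝ) T, @Measurable Ω ℝ (F t) _ (W t))
    (hWcont : ∀ ω, ContinuousOn (fun t => W t ω) (Set.Icc 0 T))
    (hWlaw : ∀ s t : ℝ, 0 ≤ s → s ≤ t → t ≤ T →
      Measure.map (fun ω => W t ω - W s ω) P = gaussianReal 0 (Real.toNNReal (t - s)))
    (hWindep : ∀ s t : ℝ, 0 ≤ s → s ≤ t → t ≤ T →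
      Indep (MeasurableSpace.comap (fun ω => W t ω - W s ω) inferInstance) (F s) P)
    (hXnonneg : ∀ t ω, 0 ≤ X t ω)
    (hXadapt : ∀ t ∈ Set.Icc (0:ℝ) T, @Measurable Ω ℝ (F t) _ (X t))
    (hXcont : ∀ ω, ContinuousOn (fun t => X t ω) (Set.Icc 0 T))
    (hXint : ∀ᵐ ω ∂P, IntervalIntegrable (fun s => |μ (X s ω)|) volume 0 T)
    (hSDE : ∀ t ∈ Set.Icc (0:ℝ) T, ∀ᵐ ω ∂P,
      X t ω = X 0 ω + (∫ s in (0:ℝ)..t, μ (X s ω)) + W t ω)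
    (c β : ℝ) (hc : 0 ≤ c) (hβ : 0 ≤ β)
    (hdrift : ∀ x : ℝ, 0 < x → x * μ x ≤ c * (1 + x ^ 2)) :
    ∀ t ∈ Set.Icc (0:ℝ) T,
      ∫⁻ ω, ENNReal.ofReal (Real.exp
          ((1 + (X t ω) ^ 2) / Real.exp (2 * t * (c + 1) + t * β)
            + ∫ s in (0:ℝ)..t, β * (1 + (X s ω) ^ 2) / Real.exp (2 * s * (c + 1) + s * β))) ∂P
        ≤ ∫⁻ ω, ENNReal.ofReal (Real.exp (1 + (X 0 ω) ^ 2)) ∂P := by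
  intro t ht
  rcases ht.1.eq_or_lt with rfl | ht0
  · simp
  set κ := 2*(c+1)+β with hκ
  have hκ0 : 0 ≤ κ := by positivity
  obtain ⟨a, ha⟩ : ∃ a : ℝ → ℝ, ∀ s, a s = Real.exp (-(κ*s)) := ⟨_, fun _ => rfl⟩
  have hdiv : ∀ s y : ℝ, y / Real.exp (2 * s * (c + 1) + s * β) = y * a s := by
    intro s y
    rw [ha, Real.exp_neg, div_eq_mul_inv, hκ]; congr 3; ring
  simp only [hdiv]
  -- the discrete exponents
  set L : ℕ → ℕ → Ω → ℝ := fun n k ω =>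
    2*a (k * (t/(n+1)))*X (k * (t/(n+1))) ω*(W (((k+1:ℕ):ℝ) * (t/(n+1))) ω - W (k * (t/(n+1))) ω)
      + a (k * (t/(n+1)))*(W (((k+1:ℕ):ℝ) * (t/(n+1))) ω - W (k * (t/(n+1))) ω)^2
      - 2*a (k * (t/(n+1)))*(t/(n+1))*(1+4*(t/(n+1)))*(1+X (k * (t/(n+1))) ω^2) with hL
  have hgrid : ∀ n k : ℕ, k ≤ n+1 → (k:ℝ) * (t/((n:ℝ)+1)) ∈ Icc 0 t := by
    intro n k hk
    refine ⟨by positivity, ?_⟩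
    have hnh : ((n+1:ℕ):ℝ) * (t/((n:ℝ)+1)) = t := by push_cast; field_simp
    conv_rhs => rw [← hnh]
    have : (k:ℝ) ≤ ((n+1:ℕ):ℝ) := by exact_mod_cast hk
    gcongr
  have hgridT : ∀ n k : ℕ, k ≤ n+1 → (k:ℝ) * (t/((n:ℝ)+1)) ∈ Icc 0 T := fun n k hk =>
    ⟨(hgrid n k hk).1, (hgrid n k hk).2.trans ht.2⟩
  set Z : ℕ → Ω → ℝ≥0∞ := fun n ω => ENNReal.ofReal (Real.exp (1 + X 0 ω^2 +
    ∑ k ∈ Finset.range (n+1), L n k ω)) with hZ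
  -- supermartingale property
  have hsuper : ∀ n : ℕ, t/((n:ℝ)+1) ≤ 1/4 → ∀ k : ℕ, k ≤ n+1 →
      Measurable[F (k * (t/((n:ℝ)+1)))] (fun ω => ENNReal.ofReal (Real.exp (1 + X 0 ω^2 +
        ∑ k ∈ Finset.range k, L n k ω))) ∧
      ∫⁻ ω, ENNReal.ofReal (Real.exp (1 + X 0 ω^2 + ∑ k ∈ Finset.range k, L n k ω)) ∂P
        ≤ ∫⁻ ω, ENNReal.ofReal (Real.exp (1 + (X 0 ω) ^ 2)) ∂P := by
    intro n hn k
    have hh0 : 0 < t/((n:ℝ)+1) := by positivity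
    induction k with
    | zero =>
      intro _
      refine ⟨?_, by simp⟩
      have : Measurable[F (((0:ℕ):ℝ) * (t/((n:ℝ)+1)))] (X 0) := by
        have := hXadapt 0 ⟨le_rfl, hT⟩
        rw [Nat.cast_zero, zero_mul]; exact this
      simp only [Finset.range_zero, Finset.sum_empty, add_zero]
      fun_prop
    | succ k ih =>
      intro hk
      obtain ⟨im, ii⟩ := ih (by omega)
      have hp := hgridT n k (by omega)
      have hq := hgridT n (k+1) hk
      have hpq : (k:ℝ) * (t/((n:ℝ)+1)) ≤ ((k+1:ℕ):ℝ) * (t/((n:ℝ)+1)) := by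
        push_cast; nlinarith
      have hdiff : ((k+1:ℕ):ℝ) * (t/((n:ℝ)+1)) - (k:ℝ) * (t/((n:ℝ)+1)) = t/((n:ℝ)+1) := by
        push_cast; ring
      have hsum : ∀ ω, ENNReal.ofReal (Real.exp (1 + X 0 ω^2 +
          ∑ k ∈ Finset.range (k+1), L n k ω)) = ENNReal.ofReal (Real.exp (1 + X 0 ω^2 +
          ∑ k ∈ Finset.range k, L n k ω)) * ENNReal.ofReal (Real.exp (L n k ω)) := by
        intro ω
        rw [Finset.sum_range_succ, ← add_assoc, Real.exp_add,
          ENNReal.ofReal_mul (Real.exp_pos _).le]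
      simp only [hsum]
      have hFle := hF_mono _ _ hpq
      have mX : Measurable[F ((k:ℝ) * (t/((n:ℝ)+1)))] (X (k * (t/((n:ℝ)+1)))) := hXadapt _ hp
      have mW : Measurable[F ((k:ℝ) * (t/((n:ℝ)+1)))] (W (k * (t/((n:ℝ)+1)))) := hWadapt _ hp
      have mW2 := hWadapt _ hq
      constructor
      · have mX' := mX.mono hFle le_rfl
        have mW' := mW.mono hFle le_rfl
        have im' := im.mono hFle le_rfl
        apply Measurable.mul im'
        simp only [hL]
        fun_prop
      · refine le_trans ?_ ii
        have hlaw := hWlaw _ _ hp.1 hpq hq.2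
        rw [hdiff] at hlaw
        refine step_aux (F ((k:ℝ) * (t/((n:ℝ)+1)))) P (hF_le _) _ im _ _ mX
          ((mW2.mono (hF_le _) le_rfl).sub (mW.mono (hF_le _) le_rfl))
          (hWindep _ _ hp.1 hpq hq.2) (a (k * (t/((n:ℝ)+1)))) (t/((n:ℝ)+1)) ?_ ?_ hh0 hn hlaw
        · rw [ha]; positivity
        · rw [ha]; apply Real.exp_le_one_iff.2
          have := mul_nonneg hκ0 hp.1
          linarith
  have hlim : Tendsto (fun n : ℕ => t / ((n:ℝ)+1)) atTop (nhds 0) := by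
    have := (tendsto_one_div_add_atTop_nhds_zero_nat (𝕜 := ℝ)).const_mul t
    simpa [div_eq_mul_inv] using this
  obtain ⟨N, hN⟩ := eventually_atTop.1 (hlim.eventually_lt_const (show (0:ℝ) < 1/4 by norm_num))
  have hZm : ∀ n, Measurable (Z (n+N)) := fun n =>
    ((hsuper (n+N) (hN _ (by omega)).le (n+N+1) le_rfl).1).mono (hF_le _) le_rfl
  have hZi : ∀ n, ∫⁻ ω, Z (n+N) ω ∂P ≤ ∫⁻ ω, ENNReal.ofReal (Real.exp (1 + (X 0 ω) ^ 2)) ∂P :=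
    fun n => (hsuper (n+N) (hN _ (by omega)).le (n+N+1) le_rfl).2
  have hsdeall : ∀ᵐ ω ∂P, ∀ n k : ℕ, k ≤ n+1 → X (k * (t/((n:ℝ)+1))) ω =
      X 0 ω + (∫ s in (0:ℝ)..(k * (t/((n:ℝ)+1))), μ (X s ω)) + W (k * (t/((n:ℝ)+1))) ω := by
    rw [ae_all_iff]; intro n
    rw [ae_all_iff]; intro k
    by_cases hk : k ≤ n+1
    · filter_upwards [hSDE _ (hgridT n k hk)] with ω hω _ using hω
    · exact Eventually.of_forall fun ω h => absurd h hk
  calc _ ≤ ∫⁻ ω, liminf (fun n => Z (n+N) ω) atTop ∂P := by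
        apply lintegral_mono_ae
        filter_upwards [hsdeall, hXint] with ω hs hi
        have hIcc : Icc 0 t ⊆ Icc 0 T := Icc_subset_Icc le_rfl ht.2
        have hxc := (hXcont ω).mono hIcc
        have hmi : IntervalIntegrable (fun s => μ (X s ω)) volume 0 t := by
          rw [intervalIntegrable_iff_integrableOn_Ioc_of_le ht0.le]
          rw [intervalIntegrable_iff_integrableOn_Ioc_of_le hT] at hi
          have hi' := hi.mono_set (Ioc_subset_Ioc_right ht.2)
          have hae : AEStronglyMeasurable (fun s => μ (X s ω)) (volume.restrict (Ioc 0 t)) := by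
            have : AEMeasurable (fun s => X s ω) (volume.restrict (Ioc 0 t)) :=
              (hxc.mono Ioc_subset_Icc_self).aemeasurable measurableSet_Ioc
            exact (hμmeas.comp_aemeasurable this).aestronglyMeasurable
          exact (integrable_norm_iff hae).1 hi'
        have hpl := path_limit a c β κ hc hβ hκ ha (fun s => X s ω) (fun s => W s ω)
          (fun s => μ (X s ω)) t ht0 hxc ((hWcont ω).mono hIcc) (hW0 ω) hmi (by
            intro s _
            rcases (hXnonneg s ω).eq_or_lt with h0 | h0
            · simp only [← h0]; simpa using hc
            · exact hdrift _ h0) hs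
        set Y := (1 + X t ω^2) * a t + ∫ s in (0:ℝ)..t, β * (1 + X s ω^2) * a s with hY
        have hε : ∀ ε > 0, ENNReal.ofReal (Real.exp (Y - ε)) ≤
            liminf (fun n => Z (n+N) ω) atTop := by
          intro ε hε
          apply le_liminf_of_le (by isBoundedDefault)
          filter_upwards [(tendsto_add_atTop_nat N).eventually (hpl ε hε)] with n hn
          apply ENNReal.ofReal_le_ofReal
          apply Real.exp_le_exp.2
          rw [hY, mul_comm (1 + X t ω^2)]
          exact hn
        have hten : Tendsto (fun ε : ℝ => ENNReal.ofReal (Real.exp (Y - ε)))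
            (nhdsWithin 0 (Ioi 0)) (nhds (ENNReal.ofReal (Real.exp Y))) := by
          have hcont : Continuous (fun ε : ℝ => ENNReal.ofReal (Real.exp (Y - ε))) :=
            ENNReal.continuous_ofReal.comp (by fun_prop)
          have := (hcont.tendsto 0).mono_left (nhdsWithin_le_nhds (s := Ioi 0))
          simpa using this
        exact le_of_tendsto hten (by filter_upwards [self_mem_nhdsWithin] with ε h using hε ε h)
    _ ≤ liminf (fun n => ∫⁻ ω, Z (n+N) ω ∂P) atTop := lintegral_liminf_le hZm
    _ ≤ _ := by
        apply liminf_le_of_le (by isBoundedDefault)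
        intro b hb
        obtain ⟨n, hn⟩ := hb.exists
        exact hn.trans (hZi n)

end
end

section
/- Assume the additive-noise setting, let α ∈ (0,∞), p ∈ (1, min{1+2α, 2}), c̃ ∈ [0,∞), c ∈ [p,∞), and assume that α − c̃·x^c ≤ x·μ(x) for all x ∈ (0,∞). Then for all t ∈ [0,T], ρ ∈ (0,∞) and ρ̃ ∈ (0,ρ) it holds that E[ exp( ρ̃(2−p)(α + (1−p)/2) ∫_0^t (X_s)^{−p} ds − c̃ρ(2−p) ∫_0^t (X_s)^{c−p} ds − ρ(X_t)^{2−p} ) ] ≤ exp( (tρ²/2) · [ ρ² / ((ρ−ρ̃)(2α+1−p)) ]^{(2p−2)/(2−p)} ) · E[ exp(−ρ(X_0)^{2−p}) ] < ∞, where the expectation on the left is computed in the extended reals (in particular (X_s)^{−p} = ∞ when X_s = 0 and exp(−∞) = 0). -/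
open MeasureTheory ProbabilityTheory Filter Set
open scoped ENNReal NNReal

noncomputable section

/-- `expENN x` is `exp(x)` for an extended nonnegative real `x`,
with the convention `exp(∞) = ∞`. -/
def expENN (x : ℝ≥0∞) : ℝ≥0∞ := if x = ⊤ then ⊤ else ENNReal.ofReal (Real.exp x.toReal)

/-- Gaussian exponential-quadratic moment. -/
lemma gauss_quad (v : ℝ≥0) (hv : v ≠ 0) (h k : ℝ) (hk : 0 < 1 - 2 * k * v) :
    ∫⁻ x, ENNReal.ofReal (Real.exp (h * x + k * x ^ 2)) ∂(gaussianReal 0 v)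
      ≤ ENNReal.ofReal (Real.exp ((h ^ 2 / 2 + k) * v / (1 - 2 * k * v))) := by
  have hv0 : (0:ℝ) < v := lt_of_le_of_ne v.2 (fun h => hv (NNReal.coe_eq_zero.mp h.symm))
  set D : ℝ := 1 - 2 * k * v with hD
  set v' : ℝ≥0 := ⟨v / D, by positivity⟩ with hv'
  have hv'c : (v' : ℝ) = v / D := rfl
  have hv'0 : v' ≠ 0 := by
    intro h0
    have : (v' : ℝ) = 0 := by rw [h0]; rfl
    rw [hv'c] at this
    have : 0 < (v:ℝ) / D := by positivity
    linarith
  set c : ℝ := Real.exp (h ^ 2 * v / (2 * D)) * (√D)⁻¹ with hc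
  have key : ∀ x, gaussianPDF 0 v x * ENNReal.ofReal (Real.exp (h * x + k * x ^ 2))
      = ENNReal.ofReal c * gaussianPDF (h * v / D) v' x := by
    intro x
    unfold gaussianPDF gaussianPDFReal
    rw [← ENNReal.ofReal_mul (by positivity), ← ENNReal.ofReal_mul (by positivity)]
    congr 1
    rw [hv'c]
    have h1 : √(2 * Real.pi * (v / D)) = √(2 * Real.pi * v) * (√D)⁻¹ := by
      rw [← Real.sqrt_inv, ← Real.sqrt_mul (by positivity)]; congr 1; ring
    have hsD : 0 < √D := Real.sqrt_pos.mpr hk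
    rw [h1, hc, mul_assoc, ← Real.exp_add]
    have h2 : -(x - 0) ^ 2 / (2 * (v:ℝ)) + (h * x + k * x ^ 2)
        = h ^ 2 * v / (2 * D) + -(x - h * v / D) ^ 2 / (2 * (v / D)) := by
      have : k = (1 - D) / (2 * v) := by rw [hD]; field_simp; ring
      rw [this]
      field_simp
      ring
    rw [h2, Real.exp_add, mul_inv, inv_inv]
    have hs2 : 0 < √(2 * Real.pi * v) := Real.sqrt_pos.mpr (by positivity)
    field_simp
  rw [gaussianReal_of_var_ne_zero _ hv,
    lintegral_withDensity_eq_lintegral_mul _ (measurable_gaussianPDF _ _) (by fun_prop)]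
  simp only [Pi.mul_apply]
  rw [lintegral_congr key, lintegral_const_mul _ (measurable_gaussianPDF _ _),
    lintegral_gaussianPDF_eq_one _ hv'0, mul_one]
  apply ENNReal.ofReal_le_ofReal
  have h3 : (√D)⁻¹ ≤ Real.exp (k * v / D) := by
    have e1 : (√D)⁻¹ = Real.exp (-(Real.log D / 2)) := by
      rw [Real.exp_neg, ← Real.log_sqrt hk.le, Real.exp_log (Real.sqrt_pos.mpr hk)]
    rw [e1]
    apply Real.exp_le_exp.mpr
    have := Real.one_sub_inv_le_log_of_pos hk
    have e2 : k * v / D = (D⁻¹ - 1) / 2 := by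
      field_simp; rw [hD]; ring
    rw [e2]; linarith
  have e3 : (h ^ 2 / 2 + k) * v / D = h ^ 2 * v / (2 * D) + k * v / D := by
    field_simp
  rw [e3, Real.exp_add, hc]
  gcongr

lemma gauss_unif (B K η : ℝ) (hB : 0 ≤ B) (hK : 0 ≤ K) (hη : 0 < η) :
    ∃ v0 > (0:ℝ), ∀ v : ℝ≥0, v ≠ 0 → (v:ℝ) ≤ v0 → ∀ h k : ℝ, |h| ≤ B → |k| ≤ K →
    ∫⁻ x, ENNReal.ofReal (Real.exp (h * x + k * x ^ 2 - (h ^ 2 / 2 + k + η) * v))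
      ∂(gaussianReal 0 v) ≤ 1 := by
  refine ⟨min (1 / (4 * K + 1)) (η / (4 * K * (B ^ 2 / 2 + K) + 1)), by positivity, ?_⟩
  intro v hv hv0 h k hh hk
  have hvp : (0:ℝ) < v := lt_of_le_of_ne v.2 (fun h => hv (NNReal.coe_eq_zero.mp h.symm))
  have h1 : (v:ℝ) * (4 * K + 1) ≤ 1 := by
    rw [← le_div_iff₀ (by positivity)]; exact hv0.trans (min_le_left _ _)
  have h2 : (v:ℝ) * (4 * K * (B ^ 2 / 2 + K) + 1) ≤ η := by
    rw [← le_div_iff₀ (by positivity)]; exact hv0.trans (min_le_right _ _)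
  have hkv : |k * v| ≤ K * v := by
    rw [abs_mul, abs_of_pos hvp]; gcongr
  have hkv' := abs_le.mp hkv
  have hD : 1 / 2 ≤ 1 - 2 * k * v := by nlinarith
  have hD0 : 0 < 1 - 2 * k * v := by linarith
  have hbase := gauss_quad v hv h k hD0
  have hsq : h ^ 2 ≤ B ^ 2 := sq_le_sq.mpr (by rwa [abs_of_nonneg hB])
  have hkey : (h ^ 2 / 2 + k) * v / (1 - 2 * k * v) ≤ (h ^ 2 / 2 + k + η) * v := by
    rw [div_le_iff₀ hD0]
    have hp : (h ^ 2 / 2 + k) * (2 * k * v) ≤ η / 2 := by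
      have a1 : |h ^ 2 / 2 + k| ≤ B ^ 2 / 2 + K := by
        refine (abs_add_le _ _).trans ?_
        rw [abs_of_nonneg (by positivity)]
        gcongr
      calc (h ^ 2 / 2 + k) * (2 * k * v) ≤ |(h ^ 2 / 2 + k) * (2 * k * v)| := le_abs_self _
        _ = |h ^ 2 / 2 + k| * (2 * |k * v|) := by
            rw [abs_mul, mul_assoc, abs_mul 2, abs_two]
        _ ≤ (B ^ 2 / 2 + K) * (2 * (K * v)) := by gcongr
        _ ≤ η / 2 := by nlinarith
    nlinarith [mul_le_mul_of_nonneg_left hp hvp.le, mul_le_mul_of_nonneg_left hD (mul_pos hη hvp).le]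
  have : ∀ x, ENNReal.ofReal (Real.exp (h * x + k * x ^ 2 - (h ^ 2 / 2 + k + η) * v))
      = ENNReal.ofReal (Real.exp (h * x + k * x ^ 2)) *
        ENNReal.ofReal (Real.exp (-((h ^ 2 / 2 + k + η) * v))) := by
    intro x
    rw [← ENNReal.ofReal_mul (by positivity), ← Real.exp_add, sub_eq_add_neg]
  rw [lintegral_congr this, lintegral_mul_const _ (by fun_prop)]
  calc _ ≤ ENNReal.ofReal (Real.exp ((h ^ 2 / 2 + k + η) * v)) *
        ENNReal.ofReal (Real.exp (-((h ^ 2 / 2 + k + η) * v))) := by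
        gcongr
        refine hbase.trans ?_
        gcongr
    _ = 1 := by
        rw [← ENNReal.ofReal_mul (by positivity), ← Real.exp_add]; simp

/-- Conditioning on an independent variable. -/
lemma indep_step {Ω β : Type*} (m : MeasurableSpace Ω) [mΩ : MeasurableSpace Ω]
    [MeasurableSpace β] (P : Measure Ω)
    [IsProbabilityMeasure P] (hm : m ≤ mΩ) (N : Ω → ℝ) (hN : Measurable N)
    (hind : Indep (MeasurableSpace.comap N inferInstance) m P)
    (U : Ω → β) (hU : @Measurable Ω β m _ U) (Φ : β × ℝ → ℝ≥0∞) (hΦ : Measurable Φ)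
    (ψ : β → ℝ≥0∞)
    (hle : ∀ ω, ∫⁻ x, Φ (U ω, x) ∂(Measure.map N P) ≤ ψ (U ω)) :
    ∫⁻ ω, Φ (U ω, N ω) ∂P ≤ ∫⁻ ω, ψ (U ω) ∂P := by
  have hU' : Measurable U := hU.mono hm le_rfl
  have hIF : IndepFun U N P := by
    rw [IndepFun_iff_Indep]
    exact (indep_of_indep_of_le_right hind hU.comap_le).symm
  have hmap := (indepFun_iff_map_prod_eq_prod_map_map hU'.aemeasurable hN.aemeasurable).mp hIF
  have : IsProbabilityMeasure (Measure.map N P) := Measure.isProbabilityMeasure_map hN.aemeasurable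
  calc ∫⁻ ω, Φ (U ω, N ω) ∂P = ∫⁻ z, Φ z ∂(Measure.map (fun ω => (U ω, N ω)) P) := by
        rw [lintegral_map hΦ (hU'.prodMk hN)]
    _ = ∫⁻ u, ∫⁻ x, Φ (u, x) ∂(Measure.map N P) ∂(Measure.map U P) := by
        rw [hmap, lintegral_prod _ hΦ.aemeasurable]
    _ = ∫⁻ ω, ∫⁻ x, Φ (U ω, x) ∂(Measure.map N P) ∂P := by
        rw [lintegral_map hΦ.lintegral_prod_right' hU']
    _ ≤ _ := lintegral_mono hle

/-- second order Taylor estimate -/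
lemma taylor2 (f f1 f2 : ℝ → ℝ) (hf : ∀ y, 0 ≤ y → HasDerivAt f (f1 y) y)
    (hf1 : ∀ y, 0 ≤ y → HasDerivAt f1 (f2 y) y) (x y δ : ℝ) (hx : 0 ≤ x) (hy : 0 ≤ y)
    (hδ : ∀ z ∈ uIcc x y, |f2 z - f2 x| ≤ δ) :
    |f y - f x - f1 x * (y - x) - f2 x / 2 * (y - x) ^ 2| ≤ δ * (y - x) ^ 2 := by
  have hpos : ∀ z ∈ uIcc x y, 0 ≤ z := by
    intro z hz
    exact le_trans (le_min hx hy) hz.1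
  have hδ0 : 0 ≤ δ := (abs_nonneg _).trans (hδ x left_mem_uIcc)
  have step1 : ∀ z ∈ uIcc x y, |f1 z - f1 x - f2 x * (z - x)| ≤ δ * |y - x| := by
    intro z hz
    have := Convex.norm_image_sub_le_of_norm_hasDerivWithin_le (s := uIcc x y) (C := δ)
      (f := fun z => f1 z - f2 x * z) (f' := fun z => f2 z - f2 x) (x := x) (y := z)
      (fun u hu => by
        have h1 := (hf1 u (hpos u hu)).sub ((hasDerivAt_id u).const_mul (f2 x))
        simp only [mul_one, id] at h1
        exact h1.hasDerivWithinAt)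
      (fun u hu => hδ u hu) (convex_uIcc x y) left_mem_uIcc hz
    rw [Real.norm_eq_abs, Real.norm_eq_abs] at this
    have e : f1 z - f2 x * z - (f1 x - f2 x * x) = f1 z - f1 x - f2 x * (z - x) := by ring
    rw [e] at this
    exact this.trans (mul_le_mul_of_nonneg_left (abs_sub_left_of_mem_uIcc hz) hδ0)
  have := Convex.norm_image_sub_le_of_norm_hasDerivWithin_le (s := uIcc x y) (C := δ * |y - x|)
      (f := fun z => f z - f1 x * z - f2 x / 2 * (z - x) ^ 2)
      (f' := fun z => f1 z - f1 x - f2 x * (z - x)) (x := x) (y := y)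
      (fun u hu => by
        have h1 := ((hf u (hpos u hu)).sub ((hasDerivAt_id u).const_mul (f1 x))).sub
          ((((hasDerivAt_id u).sub_const x).pow 2).const_mul (f2 x / 2))
        refine HasDerivAt.hasDerivWithinAt ?_
        refine h1.congr_deriv ?_
        norm_num
        ring)
      (fun u hu => step1 u hu) (convex_uIcc x y) left_mem_uIcc right_mem_uIcc
  rw [Real.norm_eq_abs, Real.norm_eq_abs, mul_assoc, ← sq, sq_abs] at this
  convert this using 2
  ring

/-- one interval of the pathwise estimate -/
lemma interval_est (f f1 f2 : ℝ → ℝ) (hf : ∀ y, 0 ≤ y → HasDerivAt f (f1 y) y)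
    (hf1 : ∀ y, 0 ≤ y → HasDerivAt f1 (f2 y) y) (hf2 : ContinuousOn f2 (Ici 0)) (K η δ : ℝ)
    (hK : ∀ y, 0 ≤ y → |f2 y| ≤ K) (hδ : 0 < δ) (hδη : 2 * δ ≤ η)
    (x w m : ℝ → ℝ) (a b : ℝ) (hab : a ≤ b) (hx0 : ∀ s, 0 ≤ x s) (hxc : ContinuousOn x (Icc a b))
    (hm : IntervalIntegrable m volume a b)
    (heq : x b - x a = (∫ s in a..b, m s) + (w b - w a))
    (o1 : |x b - x a| ≤ δ) (o2 : |w b - w a| ≤ δ)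
    (o3 : ∀ s ∈ Icc a b, |f1 (x s) - f1 (x a)| ≤ δ)
    (o4 : ∀ s ∈ Icc a b, |f2 (x s) - f2 (x a)| ≤ δ)
    (o5 : ∀ s ∈ Icc a b, |(f2 (x s) / 2 - f1 (x s) ^ 2 / 2)
        - (f2 (x a) / 2 - f1 (x a) ^ 2 / 2)| ≤ δ) :
    -(f (x b) - f (x a)) + (∫ s in a..b, (f1 (x s) * m s + (f2 (x s) / 2 - f1 (x s) ^ 2 / 2)
        - δ * ((1 + 4 * δ + K) * |m s| + 1)))
      ≤ -f1 (x a) * (w b - w a) + (η - f2 (x a) / 2) * (w b - w a) ^ 2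
        - ((-f1 (x a)) ^ 2 / 2 + (η - f2 (x a) / 2)) * (b - a) + η * (b - a) := by
  have hK0 : 0 ≤ K := (abs_nonneg _).trans (hK _ (hx0 a))
  have hf1c : ContinuousOn f1 (Ici 0) := fun y hy => (hf1 y hy).continuousAt.continuousWithinAt
  have hmaps : MapsTo x (Icc a b) (Ici 0) := fun s _ => hx0 s
  have c1 : ContinuousOn (fun s => f1 (x s)) (uIcc a b) := by
    rw [uIcc_of_le hab]; exact hf1c.comp hxc hmaps
  have c2 : ContinuousOn (fun s => f2 (x s)) (uIcc a b) := by
    rw [uIcc_of_le hab]; exact hf2.comp hxc hmaps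
  have i1 : IntervalIntegrable (fun s => f1 (x s) * m s) volume a b :=
    hm.continuousOn_mul c1
  have i2 : IntervalIntegrable (fun s => f2 (x s) / 2 - f1 (x s) ^ 2 / 2) volume a b :=
    ContinuousOn.intervalIntegrable ((c2.div_const 2).sub ((c1.pow 2).div_const 2))
  have i3 : IntervalIntegrable (fun s => δ * ((4 * δ + K) * |m s|)) volume a b :=
    (hm.abs.const_mul _).const_mul _
  have i4 : IntervalIntegrable (fun s => δ * ((1 + 4 * δ + K) * |m s| + 1)) volume a b :=
    ((hm.abs.const_mul _).add intervalIntegrable_const).const_mul _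
  have i5 : IntervalIntegrable (fun s => f1 (x a) * m s + (f2 (x a) / 2 - f1 (x a) ^ 2 / 2))
      volume a b := (hm.const_mul _).add intervalIntegrable_const
  have hItg : (∫ s in a..b, (f1 (x s) * m s + (f2 (x s) / 2 - f1 (x s) ^ 2 / 2)
        - δ * ((1 + 4 * δ + K) * |m s| + 1)))
      ≤ ∫ s in a..b, ((f1 (x a) * m s + (f2 (x a) / 2 - f1 (x a) ^ 2 / 2))
        - δ * ((4 * δ + K) * |m s|)) := by
    refine intervalIntegral.integral_mono_on hab ((i1.add i2).sub i4) (i5.sub i3) ?_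
    intro s hs
    have h5 := (abs_le.mp (o5 s hs)).2
    have h3 : (f1 (x s) - f1 (x a)) * m s ≤ δ * |m s| := by
      refine (le_abs_self _).trans ?_
      rw [abs_mul]
      exact mul_le_mul_of_nonneg_right (o3 s hs) (abs_nonneg _)
    nlinarith
  rw [intervalIntegral.integral_sub i5 i3,
    intervalIntegral.integral_add (hm.const_mul _) intervalIntegrable_const,
    intervalIntegral.integral_const_mul, intervalIntegral.integral_const_mul,
    intervalIntegral.integral_const_mul, intervalIntegral.integral_const, smul_eq_mul] at hItg
  set A := ∫ s in a..b, m s with hA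
  have hAabs : |A| ≤ ∫ s in a..b, |m s| := intervalIntegral.abs_integral_le_integral_abs hab
  set I := ∫ s in a..b, |m s|
  have hT := taylor2 f f1 f2 hf hf1 (x a) (x b) δ (hx0 a) (hx0 b) (by
    intro z hz
    have : uIcc (x a) (x b) ⊆ x '' uIcc a b := intermediate_value_uIcc (by rwa [uIcc_of_le hab])
    obtain ⟨s, hs, rfl⟩ := this hz
    rw [uIcc_of_le hab] at hs
    exact o4 s hs)
  have hT2 := (abs_le.mp hT).2
  have hT1 := (abs_le.mp hT).1
  set dx := x b - x a
  set dw := w b - w a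
  have hA2 : A = dx - dw := by linarith
  have hAb : |A| ≤ 2 * δ := by rw [hA2]; exact (abs_sub _ _).trans (by linarith)
  -- error terms
  have e1 : δ * dx ^ 2 ≤ η * dw ^ 2 + δ * (4 * δ) * |A| := by
    have : dx = A + dw := by linarith
    have hA3 : A ^ 2 ≤ 2 * δ * |A| := by
      rw [← sq_abs, sq]; gcongr
    rw [this]
    nlinarith [sq_nonneg (A - dw), sq_nonneg dw, mul_le_mul_of_nonneg_left hA3 hδ.le]
  have e2 : |f2 (x a) / 2 * (dx ^ 2 - dw ^ 2)| ≤ δ * K * |A| := by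
    have : dx ^ 2 - dw ^ 2 = A * (dx + dw) := by rw [hA2]; ring
    rw [this, abs_mul, abs_mul, abs_div, abs_two]
    have h1 := hK _ (hx0 a)
    have h2 : |dx + dw| ≤ 2 * δ := (abs_add_le _ _).trans (by linarith)
    calc |f2 (x a)| / 2 * (|A| * |dx + dw|) ≤ K / 2 * (|A| * (2 * δ)) := by gcongr
      _ = _ := by ring
  have e2' := (abs_le.mp e2).1
  have e3 : δ * ((4 * δ + K) * |A|) ≤ δ * ((4 * δ + K) * I) := by gcongr
  have hAA : f1 (x a) * A = f1 (x a) * dx - f1 (x a) * dw := by rw [hA2]; ring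
  nlinarith

/-- exponent increment -/
def stepTerm (f1 f2 : ℝ → ℝ) (η v x dw : ℝ) : ℝ :=
  -f1 x * dw + (η - f2 x / 2) * dw ^ 2 - ((-f1 x) ^ 2 / 2 + (η - f2 x / 2) + η) * v

/-- grid points -/
def grid (t : ℝ) (n i : ℕ) : ℝ := (i : ℝ) * (t / n)

lemma grid_zero (t : ℝ) (n : ℕ) : grid t n 0 = 0 := by simp [grid]

lemma grid_last (t : ℝ) (n : ℕ) (hn : n ≠ 0) : grid t n n = t := by
  have : (n:ℝ) ≠ 0 := by exact_mod_cast hn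
  unfold grid; field_simp

lemma grid_sub (t : ℝ) (n i : ℕ) : grid t n (i + 1) - grid t n i = t / n := by
  unfold grid; push_cast; ring

lemma grid_mono (t : ℝ) (ht : 0 ≤ t) (n i j : ℕ) (h : i ≤ j) : grid t n i ≤ grid t n j := by
  unfold grid; gcongr

lemma grid_mem (t : ℝ) (ht : 0 ≤ t) (n i : ℕ) (h : i ≤ n) : grid t n i ∈ Icc 0 t := by
  rcases Nat.eq_zero_or_pos n with h0 | h0
  · subst h0; simp [grid, ht]
  · refine ⟨by rw [← grid_zero t n]; exact grid_mono t ht n 0 i (Nat.zero_le _), ?_⟩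
    calc grid t n i ≤ grid t n n := grid_mono t ht n i n h
      _ = t := grid_last t n h0.ne'

lemma osc (t : ℝ) (ht : 0 ≤ t) (φ : ℝ → ℝ) (hφ : ContinuousOn φ (Icc 0 t)) (δ : ℝ) (hδ : 0 < δ) :
    ∀ᶠ n : ℕ in atTop, ∀ i < n, ∀ u ∈ Icc (grid t n i) (grid t n (i + 1)),
      |φ u - φ (grid t n i)| ≤ δ := by
  have huc := isCompact_Icc.uniformContinuousOn_of_continuous hφ
  rw [Metric.uniformContinuousOn_iff] at huc
  obtain ⟨r, hr, h⟩ := huc δ hδ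
  have hlim : Tendsto (fun n : ℕ => t / n) atTop (nhds 0) := tendsto_const_div_atTop_nhds_zero_nat t
  filter_upwards [hlim.eventually (gt_mem_nhds hr)] with n hn i hi u hu
  have m1 := grid_mem t ht n i hi.le
  have m2 := grid_mem t ht n (i + 1) hi
  have := h u ⟨m1.1.trans hu.1, hu.2.trans m2.2⟩ _ m1 (by
    rw [Real.dist_eq, abs_of_nonneg (by linarith [hu.1])]
    have := grid_sub t n i
    linarith [hu.2])
  rw [Real.dist_eq] at this
  exact this.le

lemma pathwise (f f1 f2 : ℝ → ℝ) (hf : ∀ y, 0 ≤ y → HasDerivAt f (f1 y) y)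
    (hf1 : ∀ y, 0 ≤ y → HasDerivAt f1 (f2 y) y) (hf2 : ContinuousOn f2 (Ici 0)) (K η : ℝ)
    (hK : ∀ y, 0 ≤ y → |f2 y| ≤ K) (hη : 0 < η)
    (x w m : ℝ → ℝ) (t : ℝ) (ht : 0 ≤ t) (hx0 : ∀ s, 0 ≤ x s) (hxc : ContinuousOn x (Icc 0 t))
    (hwc : ContinuousOn w (Icc 0 t))
    (hm : IntervalIntegrable m volume 0 t)
    (heq : ∀ n i : ℕ, i < n → x (grid t n (i + 1)) - x (grid t n i)
      = (∫ s in (grid t n i)..(grid t n (i + 1)), m s) + (w (grid t n (i + 1)) - w (grid t n i)))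
    (e : ℝ) (he : 0 < e) :
    ∀ᶠ n : ℕ in atTop,
      -f (x t) + f (x 0) + (∫ s in (0:ℝ)..t, (f1 (x s) * m s + (f2 (x s) / 2 - f1 (x s) ^ 2 / 2)))
        - 2 * η * t - e
      ≤ ∑ i ∈ Finset.range n, stepTerm f1 f2 η (t / n) (x (grid t n i))
          (w (grid t n (i + 1)) - w (grid t n i)) := by
  have hK0 : 0 ≤ K := (abs_nonneg _).trans (hK _ (hx0 0))
  have hf1c : ContinuousOn f1 (Ici 0) := fun y hy => (hf1 y hy).continuousAt.continuousWithinAt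
  have hmaps : MapsTo x (Icc 0 t) (Ici 0) := fun s _ => hx0 s
  have c1 : ContinuousOn (fun s => f1 (x s)) (Icc 0 t) := hf1c.comp hxc hmaps
  have c2 : ContinuousOn (fun s => f2 (x s)) (Icc 0 t) := hf2.comp hxc hmaps
  have c3 : ContinuousOn (fun s => f2 (x s) / 2 - f1 (x s) ^ 2 / 2) (Icc 0 t) :=
    (c2.div_const 2).sub ((c1.pow 2).div_const 2)
  set I := ∫ s in (0:ℝ)..t, |m s| with hI
  have hI0 : 0 ≤ I := intervalIntegral.integral_nonneg ht (fun _ _ => abs_nonneg _)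
  set δ := min (min (η / 2) 1) (e / ((5 + K) * I + t + 1)) with hδdef
  have hδ : 0 < δ := by positivity
  have hδ1 : 2 * δ ≤ η := by
    have : δ ≤ η / 2 := (min_le_left _ _).trans (min_le_left _ _)
    linarith
  have hδ2 : δ ≤ 1 := (min_le_left _ _).trans (min_le_right _ _)
  have hδ3 : δ * ((5 + K) * I + t + 1) ≤ e := by
    rw [← le_div_iff₀ (by positivity)]; exact min_le_right _ _
  have c1' := c1
  have c3' := c3
  rw [← uIcc_of_le ht] at c1' c3'
  have i1 : IntervalIntegrable (fun s => f1 (x s) * m s + (f2 (x s) / 2 - f1 (x s) ^ 2 / 2))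
      volume 0 t := (hm.continuousOn_mul c1').add c3'.intervalIntegrable
  have i4 : IntervalIntegrable (fun s => δ * ((1 + 4 * δ + K) * |m s| + 1)) volume 0 t :=
    ((hm.abs.const_mul _).add intervalIntegrable_const).const_mul _
  filter_upwards [osc t ht x hxc δ hδ, osc t ht w hwc δ hδ, osc t ht _ c1 δ hδ, osc t ht _ c2 δ hδ,
    osc t ht _ c3 δ hδ, eventually_gt_atTop 0] with n o1 o2 o3 o4 o5 hn
  have hsub : ∀ i < n, uIcc (grid t n i) (grid t n (i + 1)) ⊆ uIcc 0 t := by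
    intro i hi
    rw [uIcc_of_le ht, uIcc_of_le (grid_mono t ht n i (i+1) (Nat.le_succ i))]
    exact Icc_subset_Icc (grid_mem t ht n i hi.le).1 (grid_mem t ht n (i+1) hi).2
  have hterm : ∀ i ∈ Finset.range n,
      -(f (x (grid t n (i + 1))) - f (x (grid t n i))) + (∫ s in (grid t n i)..(grid t n (i + 1)),
        (f1 (x s) * m s + (f2 (x s) / 2 - f1 (x s) ^ 2 / 2)
        - δ * ((1 + 4 * δ + K) * |m s| + 1))) - 2 * η * (t / n)
      ≤ stepTerm f1 f2 η (t / n) (x (grid t n i))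
          (w (grid t n (i + 1)) - w (grid t n i)) := by
    intro i hi
    have hi := Finset.mem_range.mp hi
    have hle := grid_mono t ht n i (i+1) (Nat.le_succ i)
    have hs := hsub i hi
    have hs' := hs
    rw [uIcc_of_le ht, uIcc_of_le hle] at hs'
    have := interval_est f f1 f2 hf hf1 hf2 K η δ hK hδ hδ1 x w m (grid t n i) (grid t n (i+1))
      hle hx0 (hxc.mono hs') (hm.mono_set hs) (heq n i hi)
      (o1 i hi _ (right_mem_Icc.mpr hle)) (o2 i hi _ (right_mem_Icc.mpr hle))
      (o3 i hi) (o4 i hi) (o5 i hi)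
    rw [grid_sub] at this
    unfold stepTerm
    linarith
  have hsum := Finset.sum_le_sum hterm
  rw [Finset.sum_sub_distrib, Finset.sum_add_distrib,
    intervalIntegral.sum_integral_adjacent_intervals
      (fun k hk => (i1.sub i4).mono_set (hsub k hk)), Finset.sum_neg_distrib,
    Finset.sum_range_sub (fun i => f (x (grid t n i))), grid_zero, grid_last t n hn.ne',
    Finset.sum_const, Finset.card_range, nsmul_eq_mul,
    intervalIntegral.integral_sub i1 i4, intervalIntegral.integral_const_mul,
    intervalIntegral.integral_add (hm.abs.const_mul _) intervalIntegrable_const,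
    intervalIntegral.integral_const_mul, intervalIntegral.integral_const, smul_eq_mul,
    ← hI] at hsum
  have hn' : (n:ℝ) ≠ 0 := by exact_mod_cast hn.ne'
  have e1 : (n:ℝ) * (2 * η * (t / n)) = 2 * η * t := by field_simp
  have e2 : δ * ((1 + 4 * δ + K) * I + (t - 0) * 1) ≤ e := by
    refine le_trans ?_ hδ3
    have : (1 + 4 * δ + K) * I ≤ (5 + K) * I := by gcongr; linarith
    exact mul_le_mul_of_nonneg_left (by linarith) hδ.le
  linarith

lemma iterate_bound {Ω : Type*} [mΩ : MeasurableSpace Ω] (P : Measure Ω) [IsProbabilityMeasure P]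
    (T : ℝ) (F : ℝ → MeasurableSpace Ω)
    (hF_mono : ∀ s t : ℝ, s ≤ t → F s ≤ F t)
    (hF_le : ∀ t : ℝ, F t ≤ mΩ)
    (W X : ℝ → Ω → ℝ)
    (hWadapt : ∀ t ∈ Set.Icc (0:ℝ) T, @Measurable Ω ℝ (F t) _ (W t))
    (hWlaw : ∀ s t : ℝ, 0 ≤ s → s ≤ t → t ≤ T →
      Measure.map (fun ω => W t ω - W s ω) P = gaussianReal 0 (Real.toNNReal (t - s)))
    (hWindep : ∀ s t : ℝ, 0 ≤ s → s ≤ t → t ≤ T →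
      Indep (MeasurableSpace.comap (fun ω => W t ω - W s ω) inferInstance) (F s) P)
    (hXnonneg : ∀ t ω, 0 ≤ X t ω)
    (hXadapt : ∀ t ∈ Set.Icc (0:ℝ) T, @Measurable Ω ℝ (F t) _ (X t))
    (f1 f2 : ℝ → ℝ) (hf1m : Measurable f1) (hf2m : Measurable f2)
    (B K η : ℝ) (hB : ∀ y, 0 ≤ y → |f1 y| ≤ B) (hK : ∀ y, 0 ≤ y → |f2 y| ≤ K) (hη : 0 < η)
    (G : Ω → ℝ≥0∞) (hG : @Measurable Ω _ (F 0) _ G)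
    (t : ℝ) (ht : 0 < t) (htT : t ≤ T) :
    ∀ᶠ n : ℕ in atTop, ∀ j ≤ n,
      (@Measurable Ω _ (F (grid t n j)) _ (fun ω => G ω * ENNReal.ofReal (Real.exp
        (∑ i ∈ Finset.range j, stepTerm f1 f2 η (t / n) (X (grid t n i) ω)
          (W (grid t n (i + 1)) ω - W (grid t n i) ω))))) ∧
      ∫⁻ ω, G ω * ENNReal.ofReal (Real.exp
        (∑ i ∈ Finset.range j, stepTerm f1 f2 η (t / n) (X (grid t n i) ω)
          (W (grid t n (i + 1)) ω - W (grid t n i) ω))) ∂P ≤ ∫⁻ ω, G ω ∂P := by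
  have hB0 : 0 ≤ B := (abs_nonneg _).trans (hB 0 le_rfl)
  have hK0 : 0 ≤ K := (abs_nonneg _).trans (hK 0 le_rfl)
  obtain ⟨v0, hv0, hgauss⟩ := gauss_unif B (η + K / 2) η hB0 (by positivity) hη
  have hlim : Tendsto (fun n : ℕ => t / n) atTop (nhds 0) := tendsto_const_div_atTop_nhds_zero_nat t
  filter_upwards [hlim.eventually (gt_mem_nhds hv0), eventually_gt_atTop 0] with n hn hnpos
  have hnR : (0:ℝ) < n := by exact_mod_cast hnpos
  intro j
  induction j with
  | zero =>
    intro _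
    simp only [Finset.range_zero, Finset.sum_empty, Real.exp_zero, ENNReal.ofReal_one, mul_one]
    refine ⟨?_, le_rfl⟩
    rw [grid_zero]; exact hG
  | succ j ih =>
    intro hj
    obtain ⟨hmeas, hle⟩ := ih (by omega)
    have m1 := grid_mem t ht.le n j (by omega)
    have m2 := grid_mem t ht.le n (j + 1) hj
    have hmn := grid_mono t ht.le n j (j + 1) (Nat.le_succ j)
    have hW1 := hWadapt _ ⟨m1.1, m1.2.trans htT⟩
    have hW2 := hWadapt _ ⟨m2.1, m2.2.trans htT⟩
    have hX1 := hXadapt _ ⟨m1.1, m1.2.trans htT⟩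
    have hFF := hF_mono _ _ hmn
    set Y : Ω → ℝ≥0∞ := fun ω => G ω * ENNReal.ofReal (Real.exp
        (∑ i ∈ Finset.range j, stepTerm f1 f2 η (t / n) (X (grid t n i) ω)
          (W (grid t n (i + 1)) ω - W (grid t n i) ω))) with hY
    have hstep : ∀ ω, G ω * ENNReal.ofReal (Real.exp
        (∑ i ∈ Finset.range (j + 1), stepTerm f1 f2 η (t / n) (X (grid t n i) ω)
          (W (grid t n (i + 1)) ω - W (grid t n i) ω)))
        = Y ω * ENNReal.ofReal (Real.exp (stepTerm f1 f2 η (t / n) (X (grid t n j) ω)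
          (W (grid t n (j + 1)) ω - W (grid t n j) ω))) := by
      intro ω
      rw [Finset.sum_range_succ, Real.exp_add, ENNReal.ofReal_mul (by positivity), hY, mul_assoc]
    have hst : Measurable (fun z : ℝ × ℝ => stepTerm f1 f2 η (t / n) z.1 z.2) := by
      unfold stepTerm; fun_prop
    constructor
    · simp_rw [hstep]
      have a1 : @Measurable Ω _ (F (grid t n (j+1))) _ Y := hmeas.mono hFF le_rfl
      have a2 : @Measurable Ω _ (F (grid t n (j+1))) _ (X (grid t n j)) := hX1.mono hFF le_rfl
      have a3 : @Measurable Ω _ (F (grid t n (j+1))) _ (W (grid t n j)) := hW1.mono hFF le_rfl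
      have a4 := hst.comp (a2.prodMk (hW2.sub a3))
      exact a1.mul (ENNReal.measurable_ofReal.comp (Real.measurable_exp.comp a4))
    · simp_rw [hstep]
      refine le_trans ?_ hle
      have hNm : Measurable (fun ω => W (grid t n (j+1)) ω - W (grid t n j) ω) :=
        (hW2.mono (hF_le _) le_rfl).sub (hW1.mono (hF_le _) le_rfl)
      refine indep_step (F (grid t n j)) P (hF_le _) _ hNm
        (hWindep _ _ m1.1 hmn (m2.2.trans htT)) (fun ω => (Y ω, X (grid t n j) ω))
        (hmeas.prodMk hX1)
        (fun z => z.1.1 * ENNReal.ofReal (Real.exp (stepTerm f1 f2 η (t / n) z.1.2 z.2)))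
        (by
          refine (measurable_fst.comp measurable_fst).mul
            (ENNReal.measurable_ofReal.comp (Real.measurable_exp.comp ?_))
          exact hst.comp ((measurable_snd.comp measurable_fst).prodMk measurable_snd))
        (fun z => z.1) ?_
      intro ω
      simp only
      rw [hWlaw _ _ m1.1 hmn (m2.2.trans htT), grid_sub, lintegral_const_mul _ (by
        exact ENNReal.measurable_ofReal.comp (Real.measurable_exp.comp
          (hst.comp (measurable_const.prodMk measurable_id))))]
      have hvpos : 0 < t / n := by positivity
      have hvc : ((t / n).toNNReal : ℝ) = t / n := Real.coe_toNNReal _ hvpos.le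
      have := hgauss (t / n).toNNReal (by
        intro h0
        rw [h0] at hvc
        simp only [NNReal.coe_zero] at hvc
        linarith) (by rw [hvc]; exact hn.le) (-f1 (X (grid t n j) ω))
        (η - f2 (X (grid t n j) ω) / 2) (by rw [abs_neg]; exact hB _ (hXnonneg _ _)) (by
          refine (abs_sub _ _).trans ?_
          rw [abs_div, abs_two, abs_of_pos hη]
          have := hK _ (hXnonneg (grid t n j) ω)
          gcongr)
      rw [hvc] at this
      calc Y ω * _ ≤ Y ω * 1 := by
            gcongr
            exact this
        _ = Y ω := mul_one _

/-- The standing assumptions on the process. -/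
structure BesselSetup {Ω : Type*} [mΩ : MeasurableSpace Ω] (P : Measure Ω)
    (T : ℝ) (F : ℝ → MeasurableSpace Ω) (μ : ℝ → ℝ) (W X : ℝ → Ω → ℝ) : Prop where
  hF_mono : ∀ s t : ℝ, s ≤ t → F s ≤ F t
  hF_le : ∀ t : ℝ, F t ≤ mΩ
  hμmeas : Measurable μ
  hW0 : ∀ ω, W 0 ω = 0
  hWadapt : ∀ t ∈ Set.Icc (0:ℝ) T, @Measurable Ω ℝ (F t) _ (W t)
  hWcont : ∀ ω, ContinuousOn (fun t => W t ω) (Set.Icc 0 T)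
  hWlaw : ∀ s t : ℝ, 0 ≤ s → s ≤ t → t ≤ T →
      Measure.map (fun ω => W t ω - W s ω) P = gaussianReal 0 (Real.toNNReal (t - s))
  hWindep : ∀ s t : ℝ, 0 ≤ s → s ≤ t → t ≤ T →
      Indep (MeasurableSpace.comap (fun ω => W t ω - W s ω) inferInstance) (F s) P
  hXnonneg : ∀ t ω, 0 ≤ X t ω
  hXadapt : ∀ t ∈ Set.Icc (0:ℝ) T, @Measurable Ω ℝ (F t) _ (X t)
  hXcont : ∀ ω, ContinuousOn (fun t => X t ω) (Set.Icc 0 T)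
  hXint : ∀ᵐ ω ∂P, IntervalIntegrable (fun s => |μ (X s ω)|) volume 0 T
  hSDE : ∀ t ∈ Set.Icc (0:ℝ) T, ∀ᵐ ω ∂P,
      X t ω = X 0 ω + (∫ s in (0:ℝ)..t, μ (X s ω)) + W t ω

lemma BesselSetup.int {Ω : Type*} [mΩ : MeasurableSpace Ω] {P : Measure Ω}
    {T : ℝ} {F : ℝ → MeasurableSpace Ω} {μ : ℝ → ℝ} {W X : ℝ → Ω → ℝ}
    (S : BesselSetup P T F μ W X) (t : ℝ) (ht : 0 ≤ t) (htT : t ≤ T) :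
    ∀ᵐ ω ∂P, IntervalIntegrable (fun s => μ (X s ω)) volume 0 t := by
  filter_upwards [S.hXint] with ω hω
  have h1 : IntervalIntegrable (fun s => |μ (X s ω)|) volume 0 t := by
    refine hω.mono_set ?_
    rw [uIcc_of_le ht, uIcc_of_le (ht.trans htT)]
    exact Icc_subset_Icc le_rfl htT
  have hX : AEMeasurable (fun s => X s ω) (volume.restrict (Ioc 0 t)) :=
    (((S.hXcont ω).mono (Icc_subset_Icc le_rfl htT)).mono Ioc_subset_Icc_self).aemeasurable
      measurableSet_Ioc
  have hm : AEStronglyMeasurable (fun s => μ (X s ω)) (volume.restrict (uIoc 0 t)) := by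
    rw [uIoc_of_le ht]
    exact (S.hμmeas.comp_aemeasurable hX).aestronglyMeasurable
  refine h1.mono_fun hm (Eventually.of_forall fun s => ?_)
  simp

lemma main_maj {Ω : Type*} [mΩ : MeasurableSpace Ω] (P : Measure Ω) [IsProbabilityMeasure P]
    (T : ℝ) (F : ℝ → MeasurableSpace Ω) (μ : ℝ → ℝ) (W X : ℝ → Ω → ℝ)
    (S : BesselSetup P T F μ W X)
    (f f1 f2 : ℝ → ℝ) (hf : ∀ y, 0 ≤ y → HasDerivAt f (f1 y) y)
    (hf1 : ∀ y, 0 ≤ y → HasDerivAt f1 (f2 y) y) (hf2 : ContinuousOn f2 (Ici 0))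
    (hf1m : Measurable f1) (hf2m : Measurable f2)
    (B K : ℝ) (hB : ∀ y, 0 ≤ y → |f1 y| ≤ B) (hK : ∀ y, 0 ≤ y → |f2 y| ≤ K)
    (G : Ω → ℝ≥0∞) (hG : @Measurable Ω _ (F 0) _ G)
    (t : ℝ) (ht : 0 < t) (htT : t ≤ T) :
    ∃ Z : Ω → ℝ≥0∞, Measurable Z ∧ ∫⁻ ω, Z ω ∂P ≤ ∫⁻ ω, G ω ∂P ∧
      ∀ᵐ ω ∂P, G ω * ENNReal.ofReal (Real.exp (-f (X t ω) + f (X 0 ω) +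
        ∫ s in (0:ℝ)..t, (f1 (X s ω) * μ (X s ω) + (f2 (X s ω) / 2 - f1 (X s ω) ^ 2 / 2))))
        ≤ Z ω := by
  set E : Ω → ℝ := fun ω => -f (X t ω) + f (X 0 ω) +
        ∫ s in (0:ℝ)..t, (f1 (X s ω) * μ (X s ω) + (f2 (X s ω) / 2 - f1 (X s ω) ^ 2 / 2)) with hE
  have hgrid : ∀ᵐ ω ∂P, ∀ n i : ℕ, i ≤ n →
      X (grid t n i) ω = X 0 ω + (∫ s in (0:ℝ)..(grid t n i), μ (X s ω)) + W (grid t n i) ω := by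
    rw [ae_all_iff]; intro n
    rw [ae_all_iff]; intro i
    by_cases hi : i ≤ n
    · have m1 := grid_mem t ht.le n i hi
      filter_upwards [S.hSDE _ ⟨m1.1, m1.2.trans htT⟩] with ω hω _
      exact hω
    · exact Eventually.of_forall fun ω h => absurd h hi
  have hη : ∀ η : ℝ, 0 < η → ∃ Z : Ω → ℝ≥0∞, Measurable Z ∧
      ∫⁻ ω, Z ω ∂P ≤ ENNReal.ofReal (Real.exp (2 * η * t + η)) * ∫⁻ ω, G ω ∂P ∧
      ∀ᵐ ω ∂P, G ω * ENNReal.ofReal (Real.exp (E ω)) ≤ Z ω := by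
    intro η hη
    have hit := iterate_bound P T F S.hF_mono S.hF_le W X S.hWadapt S.hWlaw S.hWindep S.hXnonneg
      S.hXadapt f1 f2 hf1m hf2m B K η hB hK hη G hG t ht htT
    obtain ⟨n0, hn0⟩ := eventually_atTop.mp hit
    set Sn : ℕ → Ω → ℝ := fun n ω => ∑ i ∈ Finset.range n, stepTerm f1 f2 η (t / n)
      (X (grid t n i) ω) (W (grid t n (i + 1)) ω - W (grid t n i) ω) with hSn
    set Q : ℕ → Ω → ℝ≥0∞ := fun n ω => ENNReal.ofReal (Real.exp (2 * η * t + η)) *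
      (G ω * ENNReal.ofReal (Real.exp (Sn (n + n0) ω))) with hQ
    have hQ0 : ∀ n, Measurable (fun ω => G ω * ENNReal.ofReal (Real.exp (Sn (n + n0) ω))) :=
      fun n => ((hn0 (n + n0) (by omega) (n + n0) le_rfl).1).mono (S.hF_le _) le_rfl
    have hQm : ∀ n, Measurable (Q n) := fun n => (hQ0 n).const_mul _
    have hQi : ∀ n, ∫⁻ ω, Q n ω ∂P
        ≤ ENNReal.ofReal (Real.exp (2 * η * t + η)) * ∫⁻ ω, G ω ∂P := by
      intro n
      rw [hQ]
      simp only
      rw [lintegral_const_mul _ (hQ0 n)]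
      exact mul_le_mul' le_rfl (hn0 (n + n0) (by omega) (n + n0) le_rfl).2
    refine ⟨fun ω => liminf (fun n => Q n ω) atTop, .liminf hQm, ?_, ?_⟩
    · refine (lintegral_liminf_le hQm).trans ?_
      refine (liminf_le_liminf (Eventually.of_forall hQi)).trans ?_
      rw [liminf_const]
    · filter_upwards [hgrid, S.int t ht.le htT] with ω h1 h2
      have hp := pathwise f f1 f2 hf hf1 hf2 K η hK hη (fun s => X s ω) (fun s => W s ω)
        (fun s => μ (X s ω)) t ht.le (fun s => S.hXnonneg s ω)
        ((S.hXcont ω).mono (Icc_subset_Icc le_rfl htT))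
        ((S.hWcont ω).mono (Icc_subset_Icc le_rfl htT)) h2 (by
          intro n i hi
          rw [h1 n i hi.le, h1 n (i + 1) hi]
          have sub : ∀ k ≤ n, IntervalIntegrable (fun s => μ (X s ω)) volume 0 (grid t n k) := by
            intro k hk
            have := grid_mem t ht.le n k hk
            refine h2.mono_set ?_
            rw [uIcc_of_le ht.le, uIcc_of_le this.1]
            exact Icc_subset_Icc le_rfl this.2
          rw [← intervalIntegral.integral_interval_sub_left (sub (i+1) hi) (sub i hi.le)]
          ring) η hη
      refine le_liminf_of_le (by isBoundedDefault) ?_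
      have hp' := (tendsto_add_atTop_nat n0).eventually hp
      filter_upwards [hp'] with n hn
      rw [hQ]
      simp only
      rw [mul_left_comm, ← ENNReal.ofReal_mul (by positivity), ← Real.exp_add]
      gcongr
      have : E ω - 2 * η * t - η ≤ Sn (n + n0) ω := hn
      linarith
  choose Z hZm hZi hZae using fun k : ℕ => hη (1 / ((k:ℝ) + 1)) (by positivity)
  refine ⟨fun ω => liminf (fun n => Z n ω) atTop, .liminf hZm, ?_, ?_⟩
  · refine (lintegral_liminf_le hZm).trans ?_
    refine (liminf_le_liminf (Eventually.of_forall hZi)).trans ?_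
    have h0 : Tendsto (fun k : ℕ => 1 / ((k:ℝ) + 1)) atTop (nhds 0) :=
      tendsto_one_div_add_atTop_nhds_zero_nat
    have hc : Continuous (fun η : ℝ => ENNReal.ofReal (Real.exp (2 * η * t + η))) :=
      ENNReal.continuous_ofReal.comp (by fun_prop)
    have h1 := (hc.tendsto 0).comp h0
    have h2 : Tendsto (fun k : ℕ => ENNReal.ofReal (Real.exp (2 * (1 / ((k:ℝ) + 1)) * t
        + (1 / ((k:ℝ) + 1)))) * ∫⁻ ω, G ω ∂P) atTop (nhds (1 * ∫⁻ ω, G ω ∂P)) := by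
      refine ENNReal.Tendsto.mul_const ?_ (Or.inl one_ne_zero)
      simpa [Function.comp_def] using h1
    rw [h2.liminf_eq, one_mul]
  · filter_upwards [ae_all_iff.mpr hZae] with ω hω
    exact le_liminf_of_le (by isBoundedDefault) (Eventually.of_forall hω)

/-- The process spends zero time at the origin. -/
lemma zero_time {Ω : Type*} [mΩ : MeasurableSpace Ω] (P : Measure Ω) [IsProbabilityMeasure P]
    (T : ℝ) (F : ℝ → MeasurableSpace Ω) (μ : ℝ → ℝ) (W X : ℝ → Ω → ℝ)
    (S : BesselSetup P T F μ W X) (t : ℝ) (ht : 0 < t) (htT : t ≤ T) :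
    ∀ᵐ ω ∂P, ∀ᵐ s ∂(volume.restrict (Ioc 0 t)), X s ω ≠ 0 := by
  set f : ℕ → ℝ → ℝ := fun n x => x ^ 2 / (1 + (n:ℝ) * x ^ 2) with hfdef
  set f1 : ℕ → ℝ → ℝ := fun n x => 2 * x / (1 + (n:ℝ) * x ^ 2) ^ 2 with hf1def
  set f2 : ℕ → ℝ → ℝ := fun n x => (2 - 6 * (n:ℝ) * x ^ 2) / (1 + (n:ℝ) * x ^ 2) ^ 3 with hf2def
  have hpos : ∀ (n : ℕ) (x : ℝ), 0 < 1 + (n:ℝ) * x ^ 2 := fun n x => by positivity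
  have hd0 : ∀ (n : ℕ) (x : ℝ), HasDerivAt (fun x : ℝ => 1 + (n:ℝ) * x ^ 2) ((n:ℝ) * (2 * x)) x := by
    intro n x
    have := (((hasDerivAt_id x).pow 2).const_mul (n:ℝ)).const_add 1
    refine this.congr_deriv ?_
    norm_num
  have hd : ∀ n y, HasDerivAt (f n) (f1 n y) y := by
    intro n y
    have := ((hasDerivAt_id y).pow 2).div (hd0 n y) (hpos n y).ne'
    refine this.congr_deriv ?_
    have := (hpos n y).ne'
    simp only [hf1def, Pi.pow_apply, id]
    field_simp
    push_cast
    ring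
  have hd1 : ∀ n y, HasDerivAt (f1 n) (f2 n y) y := by
    intro n y
    have := ((hasDerivAt_id y).const_mul 2).div ((hd0 n y).pow 2) (pow_ne_zero 2 (hpos n y).ne')
    refine this.congr_deriv ?_
    have := (hpos n y).ne'
    simp only [hf2def, Pi.pow_apply, id]
    field_simp
    push_cast
    ring
  have hc1 : ∀ n, Continuous (f1 n) := fun n =>
    continuous_iff_continuousAt.mpr fun y => (hd1 n y).continuousAt
  have hc2 : ∀ n, Continuous (f2 n) := fun n => by
    rw [hf2def]
    exact Continuous.div (by fun_prop) (by fun_prop) (fun x => pow_ne_zero 3 (hpos n x).ne')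
  have hB1 : ∀ n : ℕ, ∀ y, |f1 (n + 1) y| ≤ 1 := by
    intro n y
    simp only [hf1def]
    rw [abs_div, abs_of_pos (pow_pos (hpos (n+1) y) 2), div_le_one (pow_pos (hpos (n+1) y) 2)]
    have h1 : 1 + y ^ 2 ≤ 1 + ((n + 1 : ℕ):ℝ) * y ^ 2 := by
      push_cast; nlinarith [sq_nonneg y, (Nat.cast_nonneg n : (0:ℝ) ≤ n)]
    have h2 : |2 * y| ≤ 1 + y ^ 2 := by
      rw [abs_le]; constructor <;> nlinarith [sq_nonneg (y - 1), sq_nonneg (y + 1)]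
    nlinarith [sq_nonneg y]
  have hB2 : ∀ n : ℕ, ∀ y, |f2 n y| ≤ 6 / (1 + (n:ℝ) * y ^ 2) := by
    intro n y
    simp only [hf2def]
    have hp := hpos n y
    have hz : 0 ≤ (n:ℝ) * y ^ 2 := by positivity
    rw [abs_div, abs_of_pos (pow_pos hp 3), div_le_div_iff₀ (pow_pos hp 3) hp]
    have h2 : |2 - 6 * (n:ℝ) * y ^ 2| ≤ 6 * (1 + (n:ℝ) * y ^ 2) := by
      rw [abs_le]; constructor <;> nlinarith
    have h3 : (1 + (n:ℝ) * y ^ 2) ^ 2 ≤ (1 + (n:ℝ) * y ^ 2) ^ 3 :=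
      pow_le_pow_right₀ (by linarith) (by norm_num)
    nlinarith
  have hB2' : ∀ n : ℕ, ∀ y, |f2 n y| ≤ 6 := by
    intro n y
    refine (hB2 n y).trans ?_
    rw [div_le_iff₀ (hpos n y)]
    have hz : 0 ≤ (n:ℝ) * y ^ 2 := by positivity
    linarith
  -- limits
  have hl0 : ∀ y, Tendsto (fun n : ℕ => f (n + 1) y) atTop (nhds 0) := by
    intro y
    refine squeeze_zero (fun n => ?_) (fun n => ?_) tendsto_one_div_add_atTop_nhds_zero_nat
    · simp only [hfdef]; have := hpos (n+1) y; positivity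
    · simp only [hfdef]
      rw [div_le_div_iff₀ (hpos _ _) (by positivity)]
      push_cast; nlinarith
  have hl1 : ∀ y, Tendsto (fun n : ℕ => f1 (n + 1) y) atTop (nhds 0) := by
    intro y
    by_cases hy : y = 0
    · subst hy; simp [hf1def]
    refine squeeze_zero_norm (a := fun n : ℕ => (2 / |y|) * (1 / ((n:ℝ) + 1))) (fun n => ?_) ?_
    · simp only [hf1def]
      have hp := hpos (n+1) y
      have hy' : 0 < |y| := abs_pos.mpr hy
      rw [Real.norm_eq_abs, abs_div, abs_of_pos (pow_pos hp 2), abs_mul, abs_two,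
        div_mul_div_comm, mul_one, div_le_div_iff₀ (by positivity) (by positivity)]
      have : |y| * (|y| * ((n:ℝ) + 1)) ≤ (1 + ((n+1:ℕ):ℝ) * y ^ 2) ^ 2 := by
        have hz : 0 ≤ ((n+1:ℕ):ℝ) * y ^ 2 := by positivity
        have : |y| * (|y| * ((n:ℝ) + 1)) = ((n+1:ℕ):ℝ) * y ^ 2 := by
          rw [← sq_abs y]; push_cast; ring
        rw [this]; nlinarith
      nlinarith
    · simpa using (tendsto_one_div_add_atTop_nhds_zero_nat (𝕜 := ℝ)).const_mul (2 / |y|)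
  have hl2 : ∀ y, Tendsto (fun n : ℕ => f2 (n + 1) y) atTop (nhds (if y = 0 then 2 else 0)) := by
    intro y
    by_cases hy : y = 0
    · subst hy; simp [hf2def]
    simp only [hy, if_false]
    refine squeeze_zero_norm (a := fun n : ℕ => (6 / y ^ 2) * (1 / ((n:ℝ) + 1))) (fun n => ?_) ?_
    · refine (hB2 (n+1) y).trans ?_
      have hp := hpos (n+1) y
      have hy2 : 0 < y ^ 2 := by positivity
      rw [div_mul_div_comm, mul_one, div_le_div_iff₀ hp (by positivity)]
      push_cast; nlinarith
    · simpa using (tendsto_one_div_add_atTop_nhds_zero_nat (𝕜 := ℝ)).const_mul (6 / y ^ 2)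
  choose Z hZm hZi hZae using fun n : ℕ => main_maj P T F μ W X S (f (n+1)) (f1 (n+1)) (f2 (n+1))
    (fun y _ => hd _ y) (fun y _ => hd1 _ y) (hc2 _).continuousOn (hc1 _).measurable
    (hc2 _).measurable 1 6 (fun y _ => hB1 n y) (fun y _ => hB2' _ y) (fun _ => 1)
    measurable_const t ht htT
  set L : Ω → ℝ≥0∞ := fun ω => liminf (fun n => Z n ω) atTop with hL
  have hLm : Measurable L := .liminf hZm
  have hLi : ∫⁻ ω, L ω ∂P ≤ 1 := by
    refine (lintegral_liminf_le hZm).trans ?_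
    refine (liminf_le_liminf (Eventually.of_forall hZi)).trans ?_
    simp
  have hLge : ∀ᵐ ω ∂P, ENNReal.ofReal (Real.exp (∫ s in (0:ℝ)..t, if X s ω = 0 then (1:ℝ) else 0))
      ≤ L ω := by
    filter_upwards [ae_all_iff.mpr hZae, S.int t ht.le htT] with ω hω hItg
    have hXc : ContinuousOn (fun s => X s ω) (Icc 0 t) :=
      (S.hXcont ω).mono (Icc_subset_Icc le_rfl htT)
    have hX : AEMeasurable (fun s => X s ω) (volume.restrict (uIoc 0 t)) := by
      rw [uIoc_of_le ht.le]
      exact (hXc.mono Ioc_subset_Icc_self).aemeasurable measurableSet_Ioc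
    have hlim : Tendsto (fun n : ℕ => ∫ s in (0:ℝ)..t, (f1 (n+1) (X s ω) * μ (X s ω) +
        (f2 (n+1) (X s ω) / 2 - f1 (n+1) (X s ω) ^ 2 / 2))) atTop
        (nhds (∫ s in (0:ℝ)..t, if X s ω = 0 then (1:ℝ) else 0)) := by
      refine intervalIntegral.tendsto_integral_filter_of_dominated_convergence
        (fun s => |μ (X s ω)| + 4) ?_ ?_ (hItg.abs.add intervalIntegrable_const) ?_
      · refine Eventually.of_forall fun n => ?_
        have : Measurable (fun y => f1 (n+1) y * μ y + (f2 (n+1) y / 2 - f1 (n+1) y ^ 2 / 2)) := by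
          have a1 := (hc1 (n+1)).measurable
          have a2 := (hc2 (n+1)).measurable
          have a3 := S.hμmeas
          fun_prop
        exact (this.comp_aemeasurable hX).aestronglyMeasurable
      · refine Eventually.of_forall fun n => Eventually.of_forall fun s _ => ?_
        rw [Real.norm_eq_abs]
        have b1 := hB1 n (X s ω)
        have b2 := abs_le.mp (hB2' (n+1) (X s ω))
        have b3 : |f1 (n+1) (X s ω) * μ (X s ω)| ≤ |μ (X s ω)| := by
          rw [abs_mul]
          exact mul_le_of_le_one_left (abs_nonneg _) b1
        have b4 : |f2 (n+1) (X s ω) / 2 - f1 (n+1) (X s ω) ^ 2 / 2| ≤ 4 := by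
          have b5 : f1 (n+1) (X s ω) ^ 2 ≤ 1 := by
            rw [← sq_abs]; exact pow_le_one₀ (abs_nonneg _) b1
          have b6 := sq_nonneg (f1 (n+1) (X s ω))
          rw [abs_le]; constructor <;> linarith
        exact (abs_add_le _ _).trans (add_le_add b3 b4)
      · refine Eventually.of_forall fun s _ => ?_
        have := ((hl1 (X s ω)).mul_const (μ (X s ω))).add
          (((hl2 (X s ω)).div_const 2).sub (((hl1 (X s ω)).pow 2).div_const 2))
        convert this using 2
        split_ifs <;> norm_num
    have hlim2 := (((hl0 (X t ω)).neg).add (hl0 (X 0 ω))).add hlim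
    simp only [neg_zero, zero_add] at hlim2
    have hlim3 := ENNReal.tendsto_ofReal ((Real.continuous_exp.tendsto _).comp hlim2)
    rw [← hlim3.liminf_eq]
    refine liminf_le_liminf (Eventually.of_forall fun n => ?_)
    have := hω n
    rw [one_mul] at this
    exact this
  have hL1 : ∀ᵐ ω ∂P, 1 ≤ L ω := by
    filter_upwards [hLge] with ω hω
    refine le_trans ?_ hω
    rw [← ENNReal.ofReal_one]
    apply ENNReal.ofReal_le_ofReal
    apply Real.one_le_exp
    exact intervalIntegral.integral_nonneg ht.le (fun s _ => by split_ifs <;> norm_num)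
  have hLeq : ∀ᵐ ω ∂P, (1:ℝ≥0∞) = L ω := by
    have := ae_eq_of_ae_le_of_lintegral_le (f := fun _ : Ω => (1:ℝ≥0∞)) (g := L) (μ := P) hL1
      (by simp) hLm.aemeasurable (by simpa using hLi)
    exact this
  filter_upwards [hLeq, hLge] with ω h1 h2
  have hXc : ContinuousOn (fun s => X s ω) (Icc 0 t) :=
    (S.hXcont ω).mono (Icc_subset_Icc le_rfl htT)
  have hX : AEMeasurable (fun s => X s ω) (volume.restrict (Ioc 0 t)) :=
    (hXc.mono Ioc_subset_Icc_self).aemeasurable measurableSet_Ioc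
  rw [← h1, ← ENNReal.ofReal_one, ENNReal.ofReal_le_ofReal_iff (by norm_num),
    Real.exp_le_one_iff, intervalIntegral.integral_of_le ht.le] at h2
  have hnn : 0 ≤ᵐ[volume.restrict (Ioc 0 t)] (fun s => if X s ω = 0 then (1:ℝ) else 0) :=
    Eventually.of_forall fun s => by dsimp; split_ifs <;> norm_num
  have hms : AEStronglyMeasurable (fun s => if X s ω = 0 then (1:ℝ) else 0)
      (volume.restrict (Ioc 0 t)) := by
    have : Measurable (fun y : ℝ => if y = 0 then (1:ℝ) else 0) :=
      Measurable.ite (measurableSet_singleton 0) measurable_const measurable_const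
    exact (this.comp_aemeasurable hX).aestronglyMeasurable
  have hii : Integrable (fun s => if X s ω = 0 then (1:ℝ) else 0) (volume.restrict (Ioc 0 t)) := by
    refine Integrable.mono' (integrable_const (1:ℝ)) hms (Eventually.of_forall fun s => ?_)
    split_ifs <;> norm_num
  have h3 := le_antisymm h2 (integral_nonneg_of_ae hnn)
  rw [integral_eq_zero_iff_of_nonneg_ae hnn hii] at h3
  filter_upwards [h3] with s hs h0
  simp [h0] at hs

lemma expENN_eq (x : ℝ≥0∞) : expENN x = EReal.exp (x : EReal) := by
  unfold expENN
  split_ifs with h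
  · subst h; simp
  · rw [← EReal.coe_toReal (x := (x : EReal)) (by simpa using h) (by simp), EReal.exp_coe]
    simp

lemma continuous_expENN : Continuous expENN := by
  have : expENN = fun x : ℝ≥0∞ => EReal.exp (x : EReal) := funext expENN_eq
  rw [this]
  exact EReal.expHomeomorph.continuous.comp continuous_coe_ennreal_ereal

lemma expENN_ofReal (x : ℝ) (hx : 0 ≤ x) :
    expENN (ENNReal.ofReal x) = ENNReal.ofReal (Real.exp x) := by
  unfold expENN
  rw [if_neg ENNReal.ofReal_ne_top, ENNReal.toReal_ofReal hx]

lemma sup_bound (α p ρ ρt y : ℝ) (hp1 : 1 < p) (hp2 : p < 2) (hpα : p < 1 + 2 * α)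
    (hρ : ρt < ρ) (hy : 0 < y) :
    (ρ * (2 - p) * y ^ (1 - p)) ^ 2 / 2 ≤
      (ρ - ρt) * (2 - p) * (α + (1 - p) / 2) * y ^ (-p) +
      ρ ^ 2 / 2 * (ρ ^ 2 / ((ρ - ρt) * (2 * α + 1 - p))) ^ ((2 * p - 2) / (2 - p)) := by
  set a := (ρ - ρt) * (2 * α + 1 - p) with ha
  have ha0 : 0 < a := mul_pos (by linarith) (by linarith)
  have hq0 : 0 < 2 - p := by linarith
  have hq1 : 2 - p < 1 := by linarith
  set u := y ^ (-p) with hu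
  set z := y ^ (2 - p) with hz
  have hu0 : 0 < u := Real.rpow_pos_of_pos hy _
  have hz0 : 0 < z := Real.rpow_pos_of_pos hy _
  have e1 : (y ^ (1 - p)) ^ 2 = u * z := by
    rw [hu, hz, ← Real.rpow_add hy, ← Real.rpow_natCast, ← Real.rpow_mul hy.le]
    congr 1; push_cast; ring
  have e2 : (ρ * (2 - p) * y ^ (1 - p)) ^ 2 / 2 = ρ ^ 2 * (2 - p) ^ 2 * (u * z) / 2 := by
    rw [mul_pow, e1]; ring
  have e3 : (ρ - ρt) * (2 - p) * (α + (1 - p) / 2) * u = a * (2 - p) * u / 2 := by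
    rw [ha]; ring
  rw [e2, e3]
  have hC0 : 0 ≤ ρ ^ 2 / 2 * (ρ ^ 2 / a) ^ ((2 * p - 2) / (2 - p)) := by positivity
  have hqq : (2 - p) ^ 2 ≤ 2 - p := by nlinarith
  by_cases h : ρ ^ 2 * z ≤ a
  · have : ρ ^ 2 * (2 - p) ^ 2 * (u * z) ≤ a * (2 - p) * u := by
      calc ρ ^ 2 * (2 - p) ^ 2 * (u * z) = (ρ ^ 2 * z) * (2 - p) ^ 2 * u := by ring
        _ ≤ a * (2 - p) * u := by gcongr
    linarith
  · push Not at h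
    have h1 : u * z ≤ (ρ ^ 2 / a) ^ ((2 * p - 2) / (2 - p)) := by
      have h2 : z⁻¹ ≤ ρ ^ 2 / a := by
        rw [inv_eq_one_div, div_le_div_iff₀ hz0 ha0]; linarith
      have h3 : u * z = (z⁻¹) ^ ((2 * p - 2) / (2 - p)) := by
        rw [hu, hz, ← Real.rpow_add hy, ← Real.rpow_neg hy.le, ← Real.rpow_mul hy.le]
        congr 1; field_simp; ring
      rw [h3]
      apply Real.rpow_le_rpow (by positivity) h2
      exact div_nonneg (by linarith) hq0.le
    have h4 : (2 - p) ^ 2 ≤ 1 := by nlinarith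
    have h5 : ρ ^ 2 * (2 - p) ^ 2 * (u * z)
        ≤ ρ ^ 2 * 1 * (ρ ^ 2 / a) ^ ((2 * p - 2) / (2 - p)) := by gcongr
    have h6 : 0 ≤ a * (2 - p) * u / 2 := by positivity
    linarith

lemma drift_bound (α p ct c ρ ρt x ε mx : ℝ) (hα : 0 < α) (hp1 : 1 < p) (hp2 : p < 2)
    (hpα : p < 1 + 2 * α) (hct : 0 ≤ ct) (hρt : 0 < ρt)
    (hρ : ρt < ρ) (hx : 0 < x) (hε : 0 < ε) (hd : α - ct * x ^ c ≤ x * mx) :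
    ρt * (2 - p) * (α + (1 - p) / 2) * (x + ε) ^ (-p) - ct * ρ * (2 - p) * x ^ (c - p)
      - ρ ^ 2 / 2 * (ρ ^ 2 / ((ρ - ρt) * (2 * α + 1 - p))) ^ ((2 * p - 2) / (2 - p)) ≤
    ρ * (2 - p) * (x + ε) ^ (1 - p) * mx +
      (ρ * (2 - p) * (1 - p) * (x + ε) ^ (-p) / 2
        - (ρ * (2 - p) * (x + ε) ^ (1 - p)) ^ 2 / 2) := by
  have hy : 0 < x + ε := by linarith
  have hs := sup_bound α p ρ ρt (x + ε) hp1 hp2 hpα hρ hy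
  have hq0 : 0 < 2 - p := by linarith
  have hρ0 : 0 < ρ := hρt.trans hρ
  set v := (x + ε) ^ (1 - p) with hv
  have hv0 : 0 < v := Real.rpow_pos_of_pos hy _
  set u := (x + ε) ^ (-p) with hu
  have hu0 : 0 < u := Real.rpow_pos_of_pos hy _
  have e1 : v = u * (x + ε) := by
    rw [hv, hu, ← Real.rpow_add_one hy.ne']; congr 1; ring
  have h1 : v * x ^ (c - 1) ≤ x ^ (c - p) := by
    have : v ≤ x ^ (1 - p) :=
      Real.rpow_le_rpow_of_nonpos hx (by linarith) (by linarith)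
    calc v * x ^ (c - 1) ≤ x ^ (1 - p) * x ^ (c - 1) := by gcongr
      _ = x ^ (c - p) := by rw [← Real.rpow_add hx]; congr 1; ring
  have h2 : α / x - ct * x ^ (c - 1) ≤ mx := by
    have e2 : x ^ c = x ^ (c - 1) * x := by
      rw [← Real.rpow_add_one hx.ne']; congr 1; ring
    have : (α / x - ct * x ^ (c - 1)) * x ≤ mx * x := by
      rw [sub_mul, div_mul_cancel₀ _ hx.ne', mul_assoc, ← e2]; linarith
    exact le_of_mul_le_mul_right this hx
  have h3 : α * u ≤ v * (α / x) := by
    rw [e1]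
    have : 1 ≤ (x + ε) / x := by rw [one_le_div hx]; linarith
    calc α * u = α * u * 1 := by ring
      _ ≤ α * u * ((x + ε) / x) := by gcongr
      _ = _ := by ring
  have h4 : α * u - ct * x ^ (c - p) ≤ v * mx := by
    have := mul_le_mul_of_nonneg_left h2 hv0.le
    have := mul_le_mul_of_nonneg_left h1 hct
    nlinarith
  have h5 : ρ * (2 - p) * (α * u - ct * x ^ (c - p)) ≤ ρ * (2 - p) * (v * mx) := by gcongr
  nlinarith

theorem exponential_inverse_moments_for_Bessel_type_processes
    {Ω : Type*} [MeasurableSpace Ω] (P : Measure Ω) [IsProbabilityMeasure P]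
    (T : ℝ) (hT : 0 ≤ T)
    (F : ℝ → MeasurableSpace Ω)
    (hF_mono : ∀ s t : ℝ, s ≤ t → F s ≤ F t)
    (hF_le : ∀ t : ℝ, F t ≤ (inferInstance : MeasurableSpace Ω))
    (μ : ℝ → ℝ) (hμmeas : Measurable μ)
    (W X : ℝ → Ω → ℝ)
    (hW0 : ∀ ω, W 0 ω = 0)
    (hWadapt : ∀ t ∈ Set.Icc (0:ℝ) T, @Measurable Ω ℝ (F t) _ (W t))
    (hWcont : ∀ ω, ContinuousOn (fun t => W t ω) (Set.Icc 0 T))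
    (hWlaw : ∀ s t : ℝ, 0 ≤ s → s ≤ t → t ≤ T →
      Measure.map (fun ω => W t ω - W s ω) P = gaussianReal 0 (Real.toNNReal (t - s)))
    (hWindep : ∀ s t : ℝ, 0 ≤ s → s ≤ t → t ≤ T →
      Indep (MeasurableSpace.comap (fun ω => W t ω - W s ω) inferInstance) (F s) P)
    (hXnonneg : ∀ t ω, 0 ≤ X t ω)
    (hXadapt : ∀ t ∈ Set.Icc (0:ℝ) T, @Measurable Ω ℝ (F t) _ (X t))
    (hXcont : ∀ ω, ContinuousOn (fun t => X t ω) (Set.Icc 0 T))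
    (hXint : ∀ᵐ ω ∂P, IntervalIntegrable (fun s => |μ (X s ω)|) volume 0 T)
    (hSDE : ∀ t ∈ Set.Icc (0:ℝ) T, ∀ᵐ ω ∂P,
      X t ω = X 0 ω + (∫ s in (0:ℝ)..t, μ (X s ω)) + W t ω)
    (α p ct c : ℝ) (hα : 0 < α) (hp1 : 1 < p) (hp2 : p < min (1 + 2 * α) 2)
    (hct : 0 ≤ ct) (hc : p ≤ c)
    (hdrift : ∀ x : ℝ, 0 < x → α - ct * x ^ c ≤ x * μ x) :
    ∀ t ∈ Set.Icc (0:ℝ) T, ∀ ρ ρt : ℝ, 0 < ρt → ρt < ρ →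
      (∫⁻ ω, expENN (ENNReal.ofReal (ρt * (2 - p) * (α + (1 - p) / 2)) *
            ∫⁻ s in Set.Ioc (0:ℝ) t, (ENNReal.ofReal (X s ω)) ^ (-p)) *
          ENNReal.ofReal (Real.exp (- (ct * ρ * (2 - p)) * (∫ s in (0:ℝ)..t, (X s ω) ^ (c - p))
            - ρ * (X t ω) ^ (2 - p))) ∂P)
        ≤ ENNReal.ofReal (Real.exp (t * ρ ^ 2 / 2 *
              (ρ ^ 2 / ((ρ - ρt) * (2 * α + 1 - p))) ^ ((2 * p - 2) / (2 - p)))) *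
          ∫⁻ ω, ENNReal.ofReal (Real.exp (- ρ * (X 0 ω) ^ (2 - p))) ∂P
      ∧ ENNReal.ofReal (Real.exp (t * ρ ^ 2 / 2 *
              (ρ ^ 2 / ((ρ - ρt) * (2 * α + 1 - p))) ^ ((2 * p - 2) / (2 - p)))) *
          (∫⁻ ω, ENNReal.ofReal (Real.exp (- ρ * (X 0 ω) ^ (2 - p))) ∂P) < ⊤ := by
  intro t htm ρ ρt hρt hρ
  have hρ0 : 0 < ρ := hρt.trans hρ
  have hpα : p < 1 + 2 * α := hp2.trans_le (min_le_left _ _)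
  have hp2' : p < 2 := hp2.trans_le (min_le_right _ _)
  have hq0 : 0 < 2 - p := by linarith
  have S : BesselSetup P T F μ W X := ⟨hF_mono, hF_le, hμmeas, hW0, hWadapt, hWcont, hWlaw,
    hWindep, hXnonneg, hXadapt, hXcont, hXint, hSDE⟩
  refine ⟨?_, ?_⟩
  swap
  · refine ENNReal.mul_lt_top ENNReal.ofReal_lt_top ?_
    refine lt_of_le_of_lt (b := ∫⁻ _ : Ω, 1 ∂P) (lintegral_mono fun ω => ?_) (by simp)
    rw [← ENNReal.ofReal_one]
    apply ENNReal.ofReal_le_ofReal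
    rw [Real.exp_le_one_iff]
    have := Real.rpow_nonneg (hXnonneg 0 ω) (2 - p)
    nlinarith
  rcases htm.1.eq_or_lt with h0 | ht
  · subst h0
    simp [expENN]
  have htT := htm.2
  set κ := ρt * (2 - p) * (α + (1 - p) / 2) with hκ
  have hκ0 : 0 < κ := by
    have : 0 < α + (1 - p) / 2 := by linarith
    positivity
  set C := ρ ^ 2 / 2 * (ρ ^ 2 / ((ρ - ρt) * (2 * α + 1 - p))) ^ ((2 * p - 2) / (2 - p)) with hC
  have hCt : t * ρ ^ 2 / 2 * (ρ ^ 2 / ((ρ - ρt) * (2 * α + 1 - p))) ^ ((2 * p - 2) / (2 - p))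
      = C * t := by rw [hC]; ring
  rw [hCt]
  set ε : ℕ → ℝ := fun n => 1 / ((n:ℝ) + 1) with hε
  have hε0 : ∀ n, 0 < ε n := fun n => by simp only [hε]; positivity
  have hεlim : Tendsto ε atTop (nhds 0) := tendsto_one_div_add_atTop_nhds_zero_nat
  set f : ℕ → ℝ → ℝ := fun n x => ρ * (x + ε n) ^ (2 - p) with hf
  set f1 : ℕ → ℝ → ℝ := fun n x => ρ * (2 - p) * (x + ε n) ^ (1 - p) with hf1
  set f2 : ℕ → ℝ → ℝ := fun n x => ρ * (2 - p) * (1 - p) * (x + ε n) ^ (-p) with hf2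
  have hpos : ∀ n (y : ℝ), 0 ≤ y → 0 < y + ε n := fun n y hy => by linarith [hε0 n]
  have hdr : ∀ n (r : ℝ) (y : ℝ), 0 ≤ y →
      HasDerivAt (fun x : ℝ => (x + ε n) ^ r) (r * (y + ε n) ^ (r - 1)) y := by
    intro n r y hy
    have := ((hasDerivAt_id y).add_const (ε n)).rpow_const (p := r) (Or.inl (hpos n y hy).ne')
    refine this.congr_deriv ?_
    simp
  have hd : ∀ n y, 0 ≤ y → HasDerivAt (f n) (f1 n y) y := by
    intro n y hy
    refine ((hdr n (2 - p) y hy).const_mul ρ).congr_deriv ?_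
    simp only [hf1]
    rw [show 2 - p - 1 = 1 - p by ring]; ring
  have hd1 : ∀ n y, 0 ≤ y → HasDerivAt (f1 n) (f2 n y) y := by
    intro n y hy
    refine ((hdr n (1 - p) y hy).const_mul (ρ * (2 - p))).congr_deriv ?_
    simp only [hf2]
    rw [show 1 - p - 1 = -p by ring]; ring
  have hc2 : ∀ n, ContinuousOn (f2 n) (Ici 0) := by
    intro n y hy
    exact ((hdr n (-p) y hy).continuousAt.const_mul _).continuousWithinAt
  have hm1 : ∀ n, Measurable (f1 n) := fun n => by simp only [hf1]; fun_prop
  have hm2 : ∀ n, Measurable (f2 n) := fun n => by simp only [hf2]; fun_prop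
  have hB1 : ∀ n y, 0 ≤ y → |f1 n y| ≤ ρ * (2 - p) * (ε n) ^ (1 - p) := by
    intro n y hy
    have h1 : (y + ε n) ^ (1 - p) ≤ (ε n) ^ (1 - p) :=
      Real.rpow_le_rpow_of_nonpos (hε0 n) (by linarith) (by linarith)
    have h2 := Real.rpow_nonneg (hpos n y hy).le (1 - p)
    simp only [hf1]
    rw [abs_of_nonneg (by positivity)]
    gcongr
  have hB2 : ∀ n y, 0 ≤ y → |f2 n y| ≤ ρ * (2 - p) * (p - 1) * (ε n) ^ (-p) := by
    intro n y hy
    have h1 : (y + ε n) ^ (-p) ≤ (ε n) ^ (-p) :=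
      Real.rpow_le_rpow_of_nonpos (hε0 n) (by linarith) (by linarith)
    have h2 := Real.rpow_nonneg (hpos n y hy).le (-p)
    have hp0 : 0 ≤ p - 1 := by linarith
    simp only [hf2]
    rw [show ρ * (2 - p) * (1 - p) * (y + ε n) ^ (-p)
      = -(ρ * (2 - p) * (p - 1) * (y + ε n) ^ (-p)) by ring, abs_neg, abs_of_nonneg (by positivity)]
    gcongr
  set G : ℕ → Ω → ℝ≥0∞ := fun n ω => ENNReal.ofReal (Real.exp (-f n (X 0 ω))) with hG
  have hX0 := hXadapt 0 ⟨le_rfl, hT⟩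
  have hGm : ∀ n, @Measurable Ω _ (F 0) _ (G n) := by
    intro n
    have : Measurable (fun y : ℝ => ENNReal.ofReal (Real.exp (-f n y))) := by
      simp only [hf]; fun_prop
    exact this.comp hX0
  choose Z hZm hZi hZae using fun n : ℕ => main_maj P T F μ W X S (f n) (f1 n) (f2 n)
    (hd n) (hd1 n) (hc2 n) (hm1 n) (hm2 n) _ _ (hB1 n) (hB2 n) (G n) (hGm n) t ht htT
  set V : ℕ → Ω → ℝ≥0∞ := fun n ω => ENNReal.ofReal (Real.exp (C * t)) * Z n ω with hV
  have hVm : ∀ n, Measurable (V n) := fun n => (hZm n).const_mul _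
  have hVi : ∀ n, ∫⁻ ω, V n ω ∂P ≤ ENNReal.ofReal (Real.exp (C * t)) *
      ∫⁻ ω, ENNReal.ofReal (Real.exp (- ρ * (X 0 ω) ^ (2 - p))) ∂P := by
    intro n
    simp only [hV]
    rw [lintegral_const_mul _ (hZm n)]
    refine mul_le_mul' le_rfl ((hZi n).trans (lintegral_mono fun ω => ?_))
    apply ENNReal.ofReal_le_ofReal
    apply Real.exp_le_exp.mpr
    simp only [hf]
    have : (X 0 ω) ^ (2 - p) ≤ (X 0 ω + ε n) ^ (2 - p) :=
      Real.rpow_le_rpow (hXnonneg 0 ω) (by linarith [hε0 n]) hq0.le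
    nlinarith
  refine le_trans (lintegral_mono_ae (g := fun ω => liminf (fun n => V n ω) atTop) ?_)
    ((lintegral_liminf_le hVm).trans
      ((liminf_le_liminf (Eventually.of_forall hVi)).trans (by rw [liminf_const])))
  filter_upwards [ae_all_iff.mpr hZae, S.int t ht.le htT, zero_time P T F μ W X S t ht htT]
    with ω hZ hItg hzero
  have hXc : ContinuousOn (fun s => X s ω) (Icc 0 t) := (hXcont ω).mono (Icc_subset_Icc le_rfl htT)
  have hXc' : ContinuousOn (fun s => X s ω) (uIcc 0 t) := by rwa [uIcc_of_le ht.le]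
  set J := ∫ s in (0:ℝ)..t, (X s ω) ^ (c - p) with hJ
  have hcr : ∀ n (r : ℝ), ContinuousOn (fun s => (X s ω + ε n) ^ r) (uIcc 0 t) := by
    intro n r
    exact (hXc'.add continuousOn_const).rpow_const (fun s _ => Or.inl (hpos n _ (hXnonneg s ω)).ne')
  have hcJ : IntervalIntegrable (fun s => (X s ω) ^ (c - p)) volume 0 t :=
    (hXc'.rpow_const (fun s _ => Or.inr (by linarith))).intervalIntegrable
  -- the inequality for each n
  have hineq : ∀ n, expENN (ENNReal.ofReal κ *
        ∫⁻ s in Set.Ioc (0:ℝ) t, (ENNReal.ofReal (X s ω + ε n)) ^ (-p)) *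
      ENNReal.ofReal (Real.exp (- (ct * ρ * (2 - p)) * J - ρ * (X t ω + ε n) ^ (2 - p)))
      ≤ V n ω := by
    intro n
    have hI : ∫⁻ s in Set.Ioc (0:ℝ) t, (ENNReal.ofReal (X s ω + ε n)) ^ (-p)
        = ENNReal.ofReal (∫ s in (0:ℝ)..t, (X s ω + ε n) ^ (-p)) := by
      rw [intervalIntegral.integral_of_le ht.le, ofReal_integral_eq_lintegral_ofReal]
      · refine lintegral_congr fun s => ?_
        rw [ENNReal.ofReal_rpow_of_pos (hpos n _ (hXnonneg s ω))]
      · exact ((hcr n (-p)).intervalIntegrable (μ := volume)).1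
      · exact Eventually.of_forall fun s => Real.rpow_nonneg (hpos n _ (hXnonneg s ω)).le _
    have hI0 : 0 ≤ ∫ s in (0:ℝ)..t, (X s ω + ε n) ^ (-p) :=
      intervalIntegral.integral_nonneg ht.le
        fun s _ => Real.rpow_nonneg (hpos n _ (hXnonneg s ω)).le _
    rw [hI, ← ENNReal.ofReal_mul hκ0.le, expENN_ofReal _ (mul_nonneg hκ0.le hI0),
      ← ENNReal.ofReal_mul (by positivity), ← Real.exp_add]
    have i1 : IntervalIntegrable (fun s => κ * (X s ω + ε n) ^ (-p)) volume 0 t :=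
      ((hcr n (-p)).intervalIntegrable).const_mul _
    have i2 : IntervalIntegrable (fun s => ct * ρ * (2 - p) * (X s ω) ^ (c - p)) volume 0 t :=
      hcJ.const_mul _
    have i3 : IntervalIntegrable (fun s => f1 n (X s ω) * μ (X s ω) +
        (f2 n (X s ω) / 2 - f1 n (X s ω) ^ 2 / 2)) volume 0 t := by
      have c1 : ContinuousOn (fun s => f1 n (X s ω)) (uIcc 0 t) :=
        continuousOn_const.mul (hcr n (1 - p))
      have c2 : ContinuousOn (fun s => f2 n (X s ω)) (uIcc 0 t) :=
        continuousOn_const.mul (hcr n (-p))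
      exact (hItg.continuousOn_mul c1).add
        ((c2.div_const 2).sub ((c1.pow 2).div_const 2)).intervalIntegrable
    have hmono : ∫ s in (0:ℝ)..t, (κ * (X s ω + ε n) ^ (-p)
          - ct * ρ * (2 - p) * (X s ω) ^ (c - p) - C)
        ≤ ∫ s in (0:ℝ)..t, (f1 n (X s ω) * μ (X s ω) +
        (f2 n (X s ω) / 2 - f1 n (X s ω) ^ 2 / 2)) := by
      rw [intervalIntegral.integral_of_le ht.le, intervalIntegral.integral_of_le ht.le]
      refine integral_mono_ae ((i1.sub i2).sub intervalIntegrable_const).1 i3.1 ?_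
      filter_upwards [hzero] with s hs
      have hxs : 0 < X s ω := lt_of_le_of_ne (hXnonneg s ω) (Ne.symm hs)
      exact drift_bound α p ct c ρ ρt (X s ω) (ε n) (μ (X s ω)) hα hp1 hp2' hpα hct hρt hρ hxs
        (hε0 n) (hdrift _ hxs)
    rw [intervalIntegral.integral_sub (i1.sub i2) intervalIntegrable_const,
      intervalIntegral.integral_sub i1 i2, intervalIntegral.integral_const_mul,
      intervalIntegral.integral_const_mul, intervalIntegral.integral_const, smul_eq_mul,
      ← hJ] at hmono
    refine le_trans ?_ (mul_le_mul' le_rfl (hZ n))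
    simp only [hG]
    rw [← ENNReal.ofReal_mul (by positivity), ← Real.exp_add,
      ← ENNReal.ofReal_mul (by positivity), ← Real.exp_add]
    apply ENNReal.ofReal_le_ofReal
    apply Real.exp_le_exp.mpr
    have hft : f n (X t ω) = ρ * (X t ω + ε n) ^ (2 - p) := rfl
    rw [hft]
    linarith
  refine le_trans (le_of_eq ?_) (liminf_le_liminf (Eventually.of_forall hineq))
  symm
  apply Tendsto.liminf_eq
  have hεanti : Antitone ε := by
    intro a b hab
    simp only [hε]
    gcongr
  have hl1 : Tendsto (fun n => ∫⁻ s in Set.Ioc (0:ℝ) t, (ENNReal.ofReal (X s ω + ε n)) ^ (-p)) atTop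
      (nhds (∫⁻ s in Set.Ioc (0:ℝ) t, (ENNReal.ofReal (X s ω)) ^ (-p))) := by
    apply lintegral_tendsto_of_tendsto_of_monotone
    · intro n
      have hX : AEMeasurable (fun s => X s ω) (volume.restrict (Ioc 0 t)) :=
        (hXc.mono Ioc_subset_Icc_self).aemeasurable measurableSet_Ioc
      exact ((hX.add_const _).ennreal_ofReal).pow_const _
    · refine Eventually.of_forall fun s a b hab => ?_
      simp only
      rw [ENNReal.rpow_neg, ENNReal.rpow_neg, ENNReal.inv_le_inv]
      apply ENNReal.rpow_le_rpow _ (by linarith)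
      apply ENNReal.ofReal_le_ofReal
      linarith [hεanti hab]
    · refine Eventually.of_forall fun s => ?_
      have h1 : Tendsto (fun n => ENNReal.ofReal (X s ω + ε n)) atTop
          (nhds (ENNReal.ofReal (X s ω))) := by
        apply ENNReal.tendsto_ofReal
        simpa using hεlim.const_add (X s ω)
      exact (ENNReal.continuous_rpow_const.tendsto _).comp h1
  have hl2 := (continuous_expENN.tendsto _).comp
    (ENNReal.Tendsto.const_mul hl1 (Or.inr (ENNReal.ofReal_ne_top (r := κ))))
  have hl3 : Tendsto (fun n => ENNReal.ofReal (Real.exp (- (ct * ρ * (2 - p)) * J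
      - ρ * (X t ω + ε n) ^ (2 - p)))) atTop
      (nhds (ENNReal.ofReal (Real.exp (- (ct * ρ * (2 - p)) * J - ρ * (X t ω) ^ (2 - p))))) := by
    apply ENNReal.tendsto_ofReal
    refine (Real.continuous_exp.tendsto _).comp ?_
    refine Tendsto.sub tendsto_const_nhds (Tendsto.const_mul _ ?_)
    have h1 : Tendsto (fun n => X t ω + ε n) atTop (nhds (X t ω)) := by
      simpa using hεlim.const_add (X t ω)
    exact h1.rpow_const (Or.inr hq0.le)
  refine ENNReal.Tendsto.mul hl2 (Or.inr ENNReal.ofReal_ne_top) hl3 (Or.inl ?_)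
  exact (ENNReal.ofReal_pos.mpr (Real.exp_pos _)).ne'

end
end

section
/- Assume the additive-noise setting and assume in addition that X_t(ω) ∈ (0,∞) for all (t,ω) ∈ [0,T]×Ω. Then for all t ∈ [0,T] and all p ∈ ℝ it holds that E[ (X_t)^{−p} · exp( p ∫_0^t ( μ(X_s)/X_s − (p+1)/(2(X_s)²) ) ds ) ] ≤ E[ (X_0)^{−p} ], where both expectations are computed in [0,∞]. -/
open MeasureTheory ProbabilityTheory Filter Set
open scoped ENNReal NNReal

noncomputable section

/-- dyadic partition points of `[0,t]` -/
def tau (t : ℝ) (n k : ℕ) : ℝ := t * k / 2 ^ n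

lemma tau_zero (t : ℝ) (n : ℕ) : tau t n 0 = 0 := by simp [tau]

lemma tau_last (t : ℝ) (n : ℕ) : tau t n (2 ^ n) = t := by
  simp [tau]

lemma tau_succ_sub (t : ℝ) (n k : ℕ) : tau t n (k + 1) - tau t n k = t / 2 ^ n := by
  simp only [tau]; push_cast; ring

lemma tau_le_succ {t : ℝ} (ht : 0 ≤ t) (n k : ℕ) : tau t n k ≤ tau t n (k + 1) := by
  have := tau_succ_sub t n k
  have h2 : 0 ≤ t / 2 ^ n := by positivity
  linarith

lemma tau_mem {t : ℝ} (ht : 0 ≤ t) {n k : ℕ} (hk : k ≤ 2 ^ n) : tau t n k ∈ Icc 0 t := by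
  have h1 : (k : ℝ) ≤ 2 ^ n := by exact_mod_cast hk
  refine ⟨by unfold tau; positivity, ?_⟩
  unfold tau
  rw [div_le_iff₀ (by positivity)]
  gcongr

lemma unif_small {t : ℝ} {g : ℝ → ℝ} (hg : ContinuousOn g (Icc 0 t)) {ε : ℝ}
    (hε : 0 < ε) : ∀ᶠ n : ℕ in atTop, ∀ a ∈ Icc 0 t, ∀ b ∈ Icc 0 t, |a - b| ≤ t / 2 ^ n →
      |g a - g b| < ε := by
  have hu := isCompact_Icc.uniformContinuousOn_of_continuous hg
  rw [Metric.uniformContinuousOn_iff] at hu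
  obtain ⟨δ, hδ, h⟩ := hu ε hε
  have hlim : Tendsto (fun n : ℕ => t / 2 ^ n) atTop (nhds 0) := by
    have := (tendsto_pow_atTop_nhds_zero_of_lt_one (r := (1/2 : ℝ)) (by norm_num)
      (by norm_num)).const_mul t
    simpa [div_eq_mul_inv] using this
  filter_upwards [hlim.eventually_lt_const hδ] with n hn a ha b hb hab
  exact h a ha b hb (by rw [Real.dist_eq]; linarith)

lemma ii_sub {t : ℝ} (ht : 0 ≤ t) {m : ℝ → ℝ} (hm : IntervalIntegrable m volume 0 t) {a b : ℝ}
    (ha : a ∈ Icc 0 t) (hb : b ∈ Icc 0 t) : IntervalIntegrable m volume a b := by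
  refine hm.mono_set ?_
  rw [uIcc_of_le ht]
  exact uIcc_subset_Icc ha hb

lemma sum_int {t : ℝ} (ht : 0 ≤ t) {m : ℝ → ℝ} (hm : IntervalIntegrable m volume 0 t) (n : ℕ) :
    ∑ k ∈ Finset.range (2 ^ n), ∫ s in tau t n k..tau t n (k + 1), m s = ∫ s in (0:ℝ)..t, m s := by
  rw [intervalIntegral.sum_integral_adjacent_intervals (a := tau t n), tau_zero, tau_last]
  intro k hk
  exact ii_sub ht hm (tau_mem ht hk.le) (tau_mem ht hk)

lemma riemann {t : ℝ} (ht : 0 ≤ t) {g m : ℝ → ℝ} (hg : ContinuousOn g (Icc 0 t))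
    (hm : IntervalIntegrable m volume 0 t) :
    Tendsto (fun n : ℕ => ∑ k ∈ Finset.range (2 ^ n),
      g (tau t n k) * ∫ s in tau t n k..tau t n (k + 1), m s) atTop
      (nhds (∫ s in (0:ℝ)..t, g s * m s)) := by
  have hgm : IntervalIntegrable (fun s => g s * m s) volume 0 t :=
    hm.continuousOn_mul (by rwa [uIcc_of_le ht])
  rw [Metric.tendsto_nhds]
  intro ε hε
  set C := ∫ s in (0:ℝ)..t, |m s| with hC
  have hC0 : 0 ≤ C := intervalIntegral.integral_nonneg ht (fun _ _ => abs_nonneg _)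
  have hε' : 0 < ε / (C + 1) := by positivity
  filter_upwards [unif_small hg hε'] with n hn
  rw [Real.dist_eq, ← sum_int ht hgm n, ← Finset.sum_sub_distrib]
  have key : ∀ k ∈ Finset.range (2 ^ n),
      |g (tau t n k) * (∫ s in tau t n k..tau t n (k + 1), m s) -
        ∫ s in tau t n k..tau t n (k + 1), g s * m s| ≤
      ε / (C + 1) * ∫ s in tau t n k..tau t n (k + 1), |m s| := by
    intro k hk
    have hk' := Finset.mem_range.1 hk
    have h1 := tau_mem ht hk'.le
    have h2 := tau_mem ht (Nat.succ_le_of_lt hk')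
    have h12 := tau_le_succ ht n k
    rw [← intervalIntegral.integral_const_mul, ← intervalIntegral.integral_sub
      ((ii_sub ht hm h1 h2).const_mul _) (ii_sub ht hgm h1 h2),
      ← intervalIntegral.integral_const_mul, ← Real.norm_eq_abs]
    refine intervalIntegral.norm_integral_le_of_norm_le h12 ?_
      ((ii_sub ht hm h1 h2).abs.const_mul _)
    refine ae_of_all _ fun s hs => ?_
    rw [Real.norm_eq_abs, ← sub_mul, abs_mul]
    refine mul_le_mul_of_nonneg_right ?_ (abs_nonneg _)
    refine (hn _ h1 s ⟨h1.1.trans hs.1.le, hs.2.trans h2.2⟩ ?_).le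
    have := tau_succ_sub t n k
    rw [abs_sub_comm, abs_of_nonneg (by linarith [hs.1])]
    linarith [hs.2]
  calc _ ≤ _ := Finset.abs_sum_le_sum_abs _ _
    _ ≤ _ := Finset.sum_le_sum key
    _ = ε / (C + 1) * C := by rw [← Finset.mul_sum, sum_int ht hm.abs n]
    _ < ε := by
      rw [div_mul_eq_mul_div, div_lt_iff₀ (by positivity)]
      nlinarith

lemma log_bound {r : ℝ} (hr : |r| ≤ 1 / 2) :
    |Real.log (1 + r) - r + r ^ 2 / 2| ≤ 2 * |r| * r ^ 2 := by
  have h := Real.abs_log_sub_add_sum_range_le (x := -r) (by rw [abs_neg]; linarith) 2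
  simp only [Finset.sum_range_succ, Finset.sum_range_zero, abs_neg] at h
  have e : |Real.log (1 + r) - r + r ^ 2 / 2| = |0 + (-r) ^ (0 + 1) / ((0 : ℕ) + 1 : ℝ)
    + (-r) ^ (1 + 1) / ((1 : ℕ) + 1 : ℝ) + Real.log (1 - -r)| := by
    congr 1
    push_cast
    rw [sub_neg_eq_add]; ring
  rw [e]
  refine h.trans ?_
  rw [div_le_iff₀ (by linarith), ← sq_abs r]
  have h0 := abs_nonneg r
  generalize |r| = a at hr h0
  have h1 : 0 ≤ a ^ 3 * (1 / 2 - a) := mul_nonneg (pow_nonneg h0 3) (sub_nonneg.2 hr)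
  have h2 : 2 * a * a ^ 2 * (1 - a) = a ^ (2 + 1) + 2 * (a ^ 3 * (1 / 2 - a)) := by ring
  rw [h2]
  exact le_add_of_nonneg_right (mul_nonneg zero_le_two h1)

lemma pathwise_s3 {t : ℝ} (ht : 0 ≤ t) {x w m : ℝ → ℝ} (hx : ContinuousOn x (Icc 0 t))
    (hw : ContinuousOn w (Icc 0 t)) (hpos : ∀ s ∈ Icc 0 t, 0 < x s)
    (hm : IntervalIntegrable m volume 0 t)
    (heq : ∀ n k : ℕ, k ≤ 2 ^ n → x (tau t n k) = x 0 + (∫ s in (0:ℝ)..tau t n k, m s)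
      + w (tau t n k))
    (hqv : Tendsto (fun n : ℕ => ∑ k ∈ Finset.range (2 ^ n), (1 / x (tau t n k) ^ 2) *
      ((w (tau t n (k+1)) - w (tau t n k)) ^ 2 - t / 2 ^ n)) atTop (nhds 0)) :
    Tendsto (fun n : ℕ => ∑ k ∈ Finset.range (2 ^ n), (1 / x (tau t n k)) *
      (w (tau t n (k+1)) - w (tau t n k))) atTop
      (nhds (Real.log (x t) - Real.log (x 0) + 1 / 2 * (∫ s in (0:ℝ)..t, 1 / x s ^ 2) -
        ∫ s in (0:ℝ)..t, 1 / x s * m s)) := by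
  have hne : ∀ s ∈ Icc 0 t, x s ≠ 0 := fun s hs => (hpos s hs).ne'
  have hc1 : ContinuousOn (fun s => 1 / x s) (Icc 0 t) := continuousOn_const.div hx hne
  have hc2 : ContinuousOn (fun s => 1 / x s ^ 2) (Icc 0 t) :=
    continuousOn_const.div (hx.pow 2) fun s hs => pow_ne_zero 2 (hne s hs)
  obtain ⟨K, hK⟩ := isCompact_Icc.exists_bound_of_continuousOn hc1
  obtain ⟨L, hL⟩ := isCompact_Icc.exists_bound_of_continuousOn hc2
  have h0m : (0:ℝ) ∈ Icc 0 t := ⟨le_rfl, ht⟩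
  have hK0 : 0 ≤ K := (norm_nonneg _).trans (hK 0 h0m)
  have hL0 : 0 ≤ L := (norm_nonneg _).trans (hL 0 h0m)
  set C := ∫ s in (0:ℝ)..t, |m s| with hC
  have hC0 : 0 ≤ C := intervalIntegral.integral_nonneg ht (fun _ _ => abs_nonneg _)
  -- increments of A
  set dA : ℕ → ℕ → ℝ := fun n k => ∫ s in tau t n k..tau t n (k + 1), m s with hdA
  set dw : ℕ → ℕ → ℝ := fun n k => w (tau t n (k+1)) - w (tau t n k) with hdw
  set dx : ℕ → ℕ → ℝ := fun n k => x (tau t n (k+1)) - x (tau t n k) with hdx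
  set y : ℕ → ℕ → ℝ := fun n k => x (tau t n k) with hy
  have hstep : ∀ n, ∀ k ∈ Finset.range (2 ^ n), dx n k = dA n k + dw n k := by
    intro n k hk
    have hk' := Finset.mem_range.1 hk
    have h1 := tau_mem ht hk'.le
    have h2 := tau_mem ht (Nat.succ_le_of_lt hk')
    simp only [hdx, hdA, hdw]
    rw [heq n k hk'.le, heq n (k+1) hk', ← intervalIntegral.integral_interval_sub_left
      (ii_sub ht hm h0m h2) (ii_sub ht hm h0m h1)]
    ring
  have hsmall : ∀ {g : ℝ → ℝ}, ContinuousOn g (Icc 0 t) → ∀ ε > 0, ∀ᶠ n : ℕ in atTop,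
      ∀ k ∈ Finset.range (2 ^ n), |g (tau t n (k+1)) - g (tau t n k)| < ε := by
    intro g hg ε hε
    filter_upwards [unif_small hg hε] with n hn k hk
    have hk' := Finset.mem_range.1 hk
    refine hn _ (tau_mem ht (Nat.succ_le_of_lt hk')) _ (tau_mem ht hk'.le) ?_
    rw [tau_succ_sub, abs_of_nonneg (by positivity)]
  -- cross terms
  have hcross : Tendsto (fun n : ℕ => ∑ k ∈ Finset.range (2 ^ n),
      1 / y n k ^ 2 * (dA n k * (dx n k + dw n k))) atTop (nhds 0) := by
    rw [Metric.tendsto_nhds]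
    intro ε hε
    have hδ : 0 < ε / (2 * (L * C + 1)) := by positivity
    filter_upwards [hsmall hx _ hδ, hsmall hw _ hδ] with n h1 h2
    rw [Real.dist_eq, sub_zero]
    calc _ ≤ _ := Finset.abs_sum_le_sum_abs _ _
      _ ≤ ∑ k ∈ Finset.range (2 ^ n), L * (ε / (L * C + 1)) *
          ∫ s in tau t n k..tau t n (k + 1), |m s| := by
        refine Finset.sum_le_sum fun k hk => ?_
        have hk' := Finset.mem_range.1 hk
        have e1 : |1 / y n k ^ 2| ≤ L := hL _ (tau_mem ht hk'.le)
        have e2 : |dA n k| ≤ ∫ s in tau t n k..tau t n (k + 1), |m s| :=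
          intervalIntegral.abs_integral_le_integral_abs (tau_le_succ ht n k)
        have e3 : |dx n k + dw n k| ≤ ε / (L * C + 1) := by
          have a1 : |dx n k| < _ := h1 k hk
          have a2 : |dw n k| < _ := h2 k hk
          have a3 : ε / (L * C + 1) = ε / (2 * (L * C + 1)) + ε / (2 * (L * C + 1)) := by
            field_simp; ring
          linarith [abs_add_le (dx n k) (dw n k)]
        rw [abs_mul, abs_mul, mul_assoc, mul_comm (ε / _)]
        gcongr
        exact (abs_nonneg _).trans e2
      _ = L * (ε / (L * C + 1)) * C := by rw [← Finset.mul_sum, sum_int ht hm.abs n]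
      _ < ε := by
        rw [show L * (ε / (L * C + 1)) * C = ε * (L * C) / (L * C + 1) by ring,
          div_lt_iff₀ (by positivity)]
        nlinarith
  have hR2 : Tendsto (fun n : ℕ => ∑ k ∈ Finset.range (2 ^ n), 1 / y n k ^ 2 * (t / 2 ^ n)) atTop
      (nhds (∫ s in (0:ℝ)..t, 1 / x s ^ 2)) := by
    have := riemann ht hc2 (m := fun _ => 1) intervalIntegrable_const
    simpa [tau_succ_sub, hy] using this
  have hr2 : Tendsto (fun n : ℕ => ∑ k ∈ Finset.range (2 ^ n), (dx n k / y n k) ^ 2) atTop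
      (nhds (∫ s in (0:ℝ)..t, 1 / x s ^ 2)) := by
    have := (hqv.add hR2).add hcross
    rw [zero_add, add_zero] at this
    refine this.congr fun n => ?_
    rw [← Finset.sum_add_distrib, ← Finset.sum_add_distrib]
    refine Finset.sum_congr rfl fun k hk => ?_
    have e := hstep n k hk
    have e' : dA n k = dx n k - dw n k := by linarith
    change 1 / y n k ^ 2 * (dw n k ^ 2 - t / 2 ^ n) + _ + _ = _
    rw [e', div_pow]; ring
  have herr : Tendsto (fun n : ℕ => ∑ k ∈ Finset.range (2 ^ n),
      (Real.log (1 + dx n k / y n k) - dx n k / y n k + (dx n k / y n k) ^ 2 / 2)) atTop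
      (nhds 0) := by
    set Q := ∫ s in (0:ℝ)..t, 1 / x s ^ 2
    rw [Metric.tendsto_nhds]
    intro ε hε
    have hδ : 0 < min (1/2) (ε / (2 * (|Q| + 2))) / (K + 1) := by positivity
    filter_upwards [hsmall hx _ hδ, hr2.eventually_lt_const (show Q < |Q| + 1 by
      linarith [le_abs_self Q])] with n h1 h2
    rw [Real.dist_eq, sub_zero]
    have hr : ∀ k ∈ Finset.range (2 ^ n),
        |dx n k / y n k| ≤ min (1/2) (ε / (2 * (|Q| + 2))) := by
      intro k hk
      have hk' := Finset.mem_range.1 hk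
      have e1 : |1 / y n k| ≤ K := hK _ (tau_mem ht hk'.le)
      have a1 : |dx n k| < _ := h1 k hk
      rw [div_eq_mul_one_div, abs_mul]
      calc _ ≤ min (1/2) (ε / (2 * (|Q| + 2))) / (K + 1) * (K + 1) := by
            gcongr; linarith
        _ = _ := by field_simp
    calc _ ≤ _ := Finset.abs_sum_le_sum_abs _ _
      _ ≤ ∑ k ∈ Finset.range (2 ^ n), 2 * (ε / (2 * (|Q| + 2))) * (dx n k / y n k) ^ 2 := by
        refine Finset.sum_le_sum fun k hk => ?_
        refine (log_bound ((hr k hk).trans (min_le_left _ _))).trans ?_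
        gcongr
        exact (hr k hk).trans (min_le_right _ _)
      _ ≤ 2 * (ε / (2 * (|Q| + 2))) * (|Q| + 1) := by
        rw [← Finset.mul_sum]; gcongr
      _ < ε := by
        rw [show 2 * (ε / (2 * (|Q| + 2))) * (|Q| + 1) = ε * (|Q| + 1) / (|Q| + 2) by
          field_simp, div_lt_iff₀ (by positivity)]
        nlinarith
  have hA := riemann ht hc1 hm
  have hfin := (((hr2.const_mul (1/2)).sub herr).const_add
    (Real.log (x t) - Real.log (x 0))).sub hA
  rw [sub_zero] at hfin
  refine hfin.congr fun n => ?_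
  have hlog : Real.log (x t) - Real.log (x 0) = ∑ k ∈ Finset.range (2 ^ n),
      Real.log (1 + dx n k / y n k) := by
    have := Finset.sum_range_sub (fun k => Real.log (x (tau t n k))) (2 ^ n)
    rw [tau_last, tau_zero] at this
    rw [← this]
    refine Finset.sum_congr rfl fun k hk => ?_
    have hk' := Finset.mem_range.1 hk
    have h1 := hne _ (tau_mem ht hk'.le)
    have h2 := hne _ (tau_mem ht (Nat.succ_le_of_lt hk'))
    rw [← Real.log_div h2 h1]
    congr 1
    simp only [hdx, hy]
    field_simp
    ring
  rw [hlog, Finset.mul_sum, ← Finset.sum_sub_distrib, ← Finset.sum_add_distrib,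
    ← Finset.sum_sub_distrib]
  refine Finset.sum_congr rfl fun k hk => ?_
  have e := hstep n k hk
  change _ - 1 / y n k * dA n k = 1 / y n k * dw n k
  have e' : dA n k = dx n k - dw n k := by linarith
  rw [e']; ring

section prob

lemma lintegral_exp_gauss (v : ℝ≥0) (h : ℝ) :
    ∫⁻ z, ENNReal.ofReal (Real.exp (h * z - h ^ 2 * v / 2)) ∂(gaussianReal 0 v) = 1 := by
  have hi := integrable_exp_mul_gaussianReal (μ := 0) (v := v) h
  have hm := congrFun (mgf_id_gaussianReal (μ := 0) (v := v)) h
  simp only [mgf, id] at hm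
  have e : ∀ z : ℝ, Real.exp (h * z - h ^ 2 * v / 2)
      = Real.exp (h * z) * Real.exp (- (h ^ 2 * v / 2)) := fun z => by
    rw [← Real.exp_add]; ring_nf
  simp_rw [e]
  rw [← ofReal_integral_eq_lintegral_ofReal (hi.mul_const _) (ae_of_all _ fun z => by positivity),
    integral_mul_const, hm, ← Real.exp_add]
  ring_nf
  simp

lemma exp_step {Ω : Type*} {m mΩ : MeasurableSpace Ω} {P : Measure Ω} [IsProbabilityMeasure P]
    (hm : m ≤ mΩ) {Z : Ω → ℝ} (hZ : Measurable Z) {v : ℝ≥0}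
    (hlaw : Measure.map Z P = gaussianReal 0 v)
    (hind : Indep (MeasurableSpace.comap Z inferInstance) m P)
    {G : Ω → ℝ≥0∞} (hG : Measurable[m] G) {h : Ω → ℝ} (hh : Measurable[m] h) :
    ∫⁻ ω, G ω * ENNReal.ofReal (Real.exp (h ω * Z ω - h ω ^ 2 * v / 2)) ∂P = ∫⁻ ω, G ω ∂P := by
  have hY : Measurable[m] (fun ω => (G ω, h ω)) := hG.prodMk hh
  have hY' : Measurable (fun ω => (G ω, h ω)) := hY.mono hm le_rfl
  have hI : IndepFun (fun ω => (G ω, h ω)) Z P := by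
    rw [IndepFun_iff_Indep]
    exact (indep_of_indep_of_le_right hind hY.comap_le).symm
  rw [indepFun_iff_map_prod_eq_prod_map_map hY'.aemeasurable hZ.aemeasurable, hlaw] at hI
  have hφ : Measurable (fun q : (ℝ≥0∞ × ℝ) × ℝ => q.1.1 *
      ENNReal.ofReal (Real.exp (q.1.2 * q.2 - q.1.2 ^ 2 * v / 2))) := by fun_prop
  have h1 := lintegral_map (μ := P) hφ (hY'.prodMk hZ)
  rw [hI, lintegral_prod _ hφ.aemeasurable] at h1
  rw [← h1]
  have h2 : ∀ q : ℝ≥0∞ × ℝ, ∫⁻ z, q.1 *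
      ENNReal.ofReal (Real.exp (q.2 * z - q.2 ^ 2 * v / 2)) ∂(gaussianReal 0 v) = q.1 := by
    intro q
    rw [lintegral_const_mul _ (by fun_prop), lintegral_exp_gauss, mul_one]
  simp_rw [h2]
  rw [lintegral_map measurable_fst hY']

/-- fourth-moment constant -/
def cg : ℝ := ∫ z, (z ^ 2 - 1) ^ 2 ∂(gaussianReal 0 1)

lemma memLp_poly (v : ℝ≥0) : MemLp (fun z : ℝ => z ^ 2 - v) 2 (gaussianReal 0 v) := by
  refine MemLp.sub ?_ (memLp_const _)
  have h := memLp_id_gaussianReal' (μ := 0) (v := v) 4 (by norm_num)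
  rw [memLp_two_iff_integrable_sq (by fun_prop)]
  have := h.integrable_norm_pow (p := 4) (by norm_num)
  refine this.congr (ae_of_all _ fun z => ?_)
  simp only [id, Real.norm_eq_abs]
  rw [← pow_mul, ← abs_pow, abs_of_nonneg (by positivity)]

lemma mean_poly (v : ℝ≥0) : ∫ z, (z ^ 2 - (v : ℝ)) ∂(gaussianReal 0 v) = 0 := by
  have h := variance_fun_id_gaussianReal (μ := 0) (v := v)
  rw [variance_eq_integral (by fun_prop)] at h
  simp only [integral_id_gaussianReal, sub_zero] at h
  have h2 := (memLp_id_gaussianReal' (μ := 0) (v := v) 2 (by norm_num)).integrable_sq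
  simp only [id] at h2
  rw [integral_sub h2 (integrable_const _), h]
  simp

lemma sq_poly (v : ℝ≥0) : ∫ z, (z ^ 2 - (v : ℝ)) ^ 2 ∂(gaussianReal 0 v) = cg * v ^ 2 := by
  have h := gaussianReal_map_const_mul (μ := 0) (v := 1) (Real.sqrt v)
  have e : NNReal.mk (Real.sqrt v ^ 2) (sq_nonneg _) * 1 = v := by
    ext; simp
  rw [mul_zero, e] at h
  rw [← h, integral_map (by fun_prop) (by fun_prop), cg, ← integral_mul_const]
  congr 1
  ext z
  have hv : Real.sqrt (v : ℝ) ^ 2 = (v : ℝ) := Real.sq_sqrt v.2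
  rw [mul_pow, hv]
  ring

lemma cg_nonneg : 0 ≤ cg := integral_nonneg fun _ => sq_nonneg _

lemma sq_step {Ω : Type*} {m mΩ : MeasurableSpace Ω} {P : Measure Ω} [IsProbabilityMeasure P]
    (hm : m ≤ mΩ) {Z : Ω → ℝ} (hZ : Measurable Z) {v : ℝ≥0}
    (hlaw : Measure.map Z P = gaussianReal 0 v)
    (hind : Indep (MeasurableSpace.comap Z inferInstance) m P)
    {S h : Ω → ℝ} (hS : Measurable[m] S) (hh : Measurable[m] h) (hS2 : MemLp S 2 P) {C : ℝ}
    (hC : ∀ ω, |h ω| ≤ C) :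
    MemLp (fun ω => S ω + h ω * (Z ω ^ 2 - v)) 2 P ∧
    ∫ ω, (S ω + h ω * (Z ω ^ 2 - v)) ^ 2 ∂P ≤ ∫ ω, S ω ^ 2 ∂P + C ^ 2 * (cg * v ^ 2) := by
  have hh' : Measurable h := hh.mono hm le_rfl
  have hS' : Measurable S := hS.mono hm le_rfl
  have hξ : MemLp (fun ω => Z ω ^ 2 - (v : ℝ)) 2 P := by
    have := memLp_poly v
    rw [← hlaw] at this
    exact this.comp_of_map hZ.aemeasurable
  have hξ0 : ∫ ω, (Z ω ^ 2 - (v : ℝ)) ∂P = 0 := by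
    rw [← mean_poly v, ← hlaw, integral_map hZ.aemeasurable (by fun_prop)]
  have hξ2 : ∫ ω, (Z ω ^ 2 - (v : ℝ)) ^ 2 ∂P = cg * v ^ 2 := by
    rw [← sq_poly v, ← hlaw, integral_map hZ.aemeasurable (by fun_prop)]
  have hhξ : MemLp (fun ω => h ω * (Z ω ^ 2 - v)) 2 P := by
    refine hξ.of_le_mul (c := C) (by fun_prop) (ae_of_all _ fun ω => ?_)
    rw [norm_mul]
    exact mul_le_mul_of_nonneg_right (hC ω) (norm_nonneg _)
  refine ⟨hS2.add hhξ, ?_⟩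
  have hcr : ∫ ω, (S ω * h ω) * (Z ω ^ 2 - (v : ℝ)) ∂P = 0 := by
    have hI : IndepFun (fun ω => S ω * h ω) (fun ω => Z ω ^ 2 - (v : ℝ)) P := by
      have hY : Measurable[m] (fun ω => S ω * h ω) := hS.mul hh
      have : IndepFun (fun ω => S ω * h ω) Z P := by
        rw [IndepFun_iff_Indep]
        exact (indep_of_indep_of_le_right hind hY.comap_le).symm
      exact this.comp (φ := id) (ψ := fun z : ℝ => z ^ 2 - (v : ℝ)) measurable_id (by fun_prop)
    rw [hI.integral_fun_mul_eq_mul_integral (by fun_prop) (by fun_prop), hξ0, mul_zero]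
  have hcri : Integrable (fun ω => (S ω * h ω) * (Z ω ^ 2 - (v : ℝ))) P := by
    have := hS2.integrable_mul hhξ
    refine this.congr (ae_of_all _ fun ω => ?_)
    simp only [Pi.mul_apply]; ring
  have e : ∀ ω, (S ω + h ω * (Z ω ^ 2 - v)) ^ 2 =
      S ω ^ 2 + (2 * ((S ω * h ω) * (Z ω ^ 2 - (v : ℝ))) + (h ω * (Z ω ^ 2 - v)) ^ 2) := by
    intro ω; ring
  simp_rw [e]
  rw [integral_add hS2.integrable_sq (g := fun ω => 2 * ((S ω * h ω) * (Z ω ^ 2 - (v : ℝ))) +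
    (h ω * (Z ω ^ 2 - v)) ^ 2) ((hcri.const_mul 2).add hhξ.integrable_sq),
    integral_add (hcri.const_mul 2) hhξ.integrable_sq, integral_const_mul, hcr, mul_zero, zero_add]
  gcongr
  rw [← hξ2, ← integral_const_mul]
  refine integral_mono hhξ.integrable_sq (hξ.integrable_sq.const_mul _) fun ω => ?_
  simp only [mul_pow]
  refine mul_le_mul_of_nonneg_right ?_ (sq_nonneg _)
  rw [← sq_abs]
  exact pow_le_pow_left₀ (abs_nonneg _) (hC ω) 2

lemma ae_tendsto_zero {Ω : Type*} {mΩ : MeasurableSpace Ω} {P : Measure Ω}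
    {S : ℕ → Ω → ℝ} (hS : ∀ n, MemLp (S n) 2 P) {K : ℝ}
    (hK : ∀ n, ∫ ω, S n ω ^ 2 ∂P ≤ K * (1 / 2) ^ n) :
    ∀ᵐ ω ∂P, Tendsto (fun n => S n ω) atTop (nhds 0) := by
  have h1 : ∫⁻ ω, ∑' n, ENNReal.ofReal (S n ω ^ 2) ∂P ≠ ∞ := by
    rw [lintegral_tsum fun n => ((hS n).1.aemeasurable.pow_const 2).ennreal_ofReal]
    have hle : ∀ n, ∫⁻ ω, ENNReal.ofReal (S n ω ^ 2) ∂P ≤ ENNReal.ofReal (K * (1 / 2) ^ n) := by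
      intro n
      rw [← ofReal_integral_eq_lintegral_ofReal (hS n).integrable_sq
        (ae_of_all _ fun ω => sq_nonneg _)]
      exact ENNReal.ofReal_le_ofReal (hK n)
    refine ne_top_of_le_ne_top ?_ (ENNReal.tsum_le_tsum hle)
    have hs : Summable fun n : ℕ => K * (1 / 2 : ℝ) ^ n := summable_geometric_two.mul_left K
    exact hs.tsum_ofReal_ne_top
  have h2 := ae_lt_top' (AEMeasurable.tsum fun n =>
    ((hS n).1.aemeasurable.pow_const 2).ennreal_ofReal) h1
  filter_upwards [h2] with ω hω
  have h3 := ENNReal.tendsto_atTop_zero_of_tsum_ne_top hω.ne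
  have h4 := (ENNReal.tendsto_toReal ENNReal.zero_ne_top).comp h3
  simp only [Function.comp_def, ENNReal.toReal_ofReal (sq_nonneg _), ENNReal.toReal_zero] at h4
  have h5 := h4.sqrt
  simp only [Real.sqrt_sq_eq_abs, Real.sqrt_zero] at h5
  exact (tendsto_zero_iff_abs_tendsto_zero _).2 h5

end prob

theorem inverse_moments_with_exponential_weight
    {Ω : Type*} [MeasurableSpace Ω] (P : Measure Ω) [IsProbabilityMeasure P]
    (T : ℝ) (hT : 0 ≤ T)
    (F : ℝ → MeasurableSpace Ω)
    (hF_mono : ∀ s t : ℝ, s ≤ t → F s ≤ F t)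
    (hF_le : ∀ t : ℝ, F t ≤ (inferInstance : MeasurableSpace Ω))
    (μ : ℝ → ℝ) (hμmeas : Measurable μ)
    (W X : ℝ → Ω → ℝ)
    (hW0 : ∀ ω, W 0 ω = 0)
    (hWadapt : ∀ t ∈ Set.Icc (0:ℝ) T, @Measurable Ω ℝ (F t) _ (W t))
    (hWcont : ∀ ω, ContinuousOn (fun t => W t ω) (Set.Icc 0 T))
    (hWlaw : ∀ s t : ℝ, 0 ≤ s → s ≤ t → t ≤ T →
      Measure.map (fun ω => W t ω - W s ω) P = gaussianReal 0 (Real.toNNReal (t - s)))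
    (hWindep : ∀ s t : ℝ, 0 ≤ s → s ≤ t → t ≤ T →
      Indep (MeasurableSpace.comap (fun ω => W t ω - W s ω) inferInstance) (F s) P)
    (hXnonneg : ∀ t ω, 0 ≤ X t ω)
    (hXadapt : ∀ t ∈ Set.Icc (0:ℝ) T, @Measurable Ω ℝ (F t) _ (X t))
    (hXcont : ∀ ω, ContinuousOn (fun t => X t ω) (Set.Icc 0 T))
    (hXint : ∀ᵐ ω ∂P, IntervalIntegrable (fun s => |μ (X s ω)|) volume 0 T)
    (hSDE : ∀ t ∈ Set.Icc (0:ℝ) T, ∀ᵐ ω ∂P,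
      X t ω = X 0 ω + (∫ s in (0:ℝ)..t, μ (X s ω)) + W t ω)
    (hXpos : ∀ t ∈ Set.Icc (0:ℝ) T, ∀ ω, 0 < X t ω) :
    ∀ t ∈ Set.Icc (0:ℝ) T, ∀ p : ℝ,
      ∫⁻ ω, ENNReal.ofReal ((X t ω) ^ (-p) *
          Real.exp (p * ∫ s in (0:ℝ)..t,
            (μ (X s ω) / X s ω - (p + 1) / (2 * (X s ω) ^ 2)))) ∂P
        ≤ ∫⁻ ω, ENNReal.ofReal ((X 0 ω) ^ (-p)) ∂P := by
  intro t ht p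
  have ht0 : 0 ≤ t := ht.1
  have htau : ∀ n k : ℕ, k ≤ 2 ^ n → tau t n k ∈ Icc 0 T := fun n k hk =>
    ⟨(tau_mem ht0 hk).1, (tau_mem ht0 hk).2.trans ht.2⟩
  set v : ℕ → ℝ≥0 := fun n => Real.toNNReal (t / 2 ^ n) with hv
  have hvc : ∀ n, (v n : ℝ) = t / 2 ^ n := fun n => Real.coe_toNNReal _ (by positivity)
  set Z : ℕ → ℕ → Ω → ℝ := fun n k ω => W (tau t n (k+1)) ω - W (tau t n k) ω with hZ
  have hZF : ∀ n k, k < 2 ^ n → Measurable[F (tau t n (k+1))] (Z n k) := by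
    intro n k hk
    exact (hWadapt _ (htau n (k+1) hk)).sub
      ((hWadapt _ (htau n k hk.le)).mono (hF_mono _ _ (tau_le_succ ht0 n k)) le_rfl)
  have hZm : ∀ n k, k < 2 ^ n → Measurable (Z n k) := fun n k hk =>
    (hZF n k hk).mono (hF_le _) le_rfl
  have hZlaw : ∀ n k, k < 2 ^ n → Measure.map (Z n k) P = gaussianReal 0 (v n) := by
    intro n k hk
    simp only [hv]
    rw [← tau_succ_sub t n k]
    exact hWlaw _ _ (htau n k hk.le).1 (tau_le_succ ht0 n k) (htau n (k+1) hk).2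
  have hZind : ∀ n k, k < 2 ^ n →
      Indep (MeasurableSpace.comap (Z n k) inferInstance) (F (tau t n k)) P := fun n k hk =>
    hWindep _ _ (htau n k hk.le).1 (tau_le_succ ht0 n k) (htau n (k+1) hk).2
  -- quadratic variation
  have hQV : ∀ C : ℕ, ∀ᵐ ω ∂P, Tendsto (fun n : ℕ => ∑ k ∈ Finset.range (2 ^ n),
      min (1 / X (tau t n k) ω ^ 2) (C : ℝ) * (Z n k ω ^ 2 - v n)) atTop (nhds 0) := by
    intro C
    have hind : ∀ n j : ℕ, j ≤ 2 ^ n →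
        Measurable[F (tau t n j)] (fun ω => ∑ k ∈ Finset.range j,
          min (1 / X (tau t n k) ω ^ 2) (C : ℝ) * (Z n k ω ^ 2 - v n)) ∧
        MemLp (fun ω => ∑ k ∈ Finset.range j,
          min (1 / X (tau t n k) ω ^ 2) (C : ℝ) * (Z n k ω ^ 2 - v n)) 2 P ∧
        ∫ ω, (∑ k ∈ Finset.range j,
          min (1 / X (tau t n k) ω ^ 2) (C : ℝ) * (Z n k ω ^ 2 - v n)) ^ 2 ∂P ≤
          j * ((C : ℝ) ^ 2 * (cg * (v n : ℝ) ^ 2)) := by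
      intro n j
      induction j with
      | zero =>
        intro _
        refine ⟨?_, ?_, ?_⟩
        · simp only [Finset.range_zero, Finset.sum_empty]
          exact measurable_const
        · simp
        · simp
      | succ j ih =>
        intro hj
        have hj' : j < 2 ^ n := hj
        obtain ⟨i1, i2, i3⟩ := ih hj'.le
        have hXm := hXadapt _ (htau n j hj'.le)
        have hh : Measurable[F (tau t n j)]
            (fun ω => min (1 / X (tau t n j) ω ^ 2) (C : ℝ)) :=
          ((hXm.pow_const 2).const_div 1).min measurable_const
        have hb : ∀ ω, |min (1 / X (tau t n j) ω ^ 2) (C : ℝ)| ≤ C := by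
          intro ω
          rw [abs_of_nonneg (le_min (by positivity) (by positivity))]
          exact min_le_right _ _
        obtain ⟨s1, s2⟩ := sq_step (hF_le _) (hZm n j hj') (hZlaw n j hj') (hZind n j hj')
          i1 hh i2 hb
        simp only [Finset.sum_range_succ]
        refine ⟨?_, s1, ?_⟩
        · have hle := hF_mono _ _ (tau_le_succ ht0 n j)
          exact (i1.mono hle le_rfl).add ((hh.mono hle le_rfl).mul
            (((hZF n j hj').pow_const 2).sub_const _))
        · refine s2.trans ?_
          push_cast
          linarith
    refine ae_tendsto_zero (fun n => (hind n _ le_rfl).2.1) (K := (C : ℝ) ^ 2 * cg * t ^ 2)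
      fun n => (hind n _ le_rfl).2.2.trans (le_of_eq ?_)
    rw [hvc]
    push_cast
    rw [one_div, inv_pow]
    field_simp
  -- exponential martingale
  set h : ℕ → ℕ → Ω → ℝ := fun n k ω => -p * (1 / X (tau t n k) ω) with hh
  set G : ℕ → ℕ → Ω → ℝ≥0∞ := fun n j ω => ENNReal.ofReal (X 0 ω ^ (-p)) *
    ∏ k ∈ Finset.range j, ENNReal.ofReal
      (Real.exp (h n k ω * Z n k ω - h n k ω ^ 2 * v n / 2)) with hG
  have hexp : ∀ n j : ℕ, j ≤ 2 ^ n → Measurable[F (tau t n j)] (G n j) ∧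
      ∫⁻ ω, G n j ω ∂P = ∫⁻ ω, ENNReal.ofReal (X 0 ω ^ (-p)) ∂P := by
    intro n j
    induction j with
    | zero =>
      intro _
      simp only [hG, Finset.range_zero, Finset.prod_empty, mul_one, and_true]
      rw [tau_zero]
      exact ((hXadapt 0 ⟨le_rfl, hT⟩).pow_const (-p)).ennreal_ofReal
    | succ j ih =>
      intro hj
      have hj' : j < 2 ^ n := hj
      obtain ⟨i1, i2⟩ := ih hj'.le
      have hXm := hXadapt _ (htau n j hj'.le)
      have hhm : Measurable[F (tau t n j)] (h n j) := (hXm.const_div 1).const_mul (-p)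
      have e : G n (j + 1) = fun ω => G n j ω * ENNReal.ofReal
          (Real.exp (h n j ω * Z n j ω - h n j ω ^ 2 * v n / 2)) := by
        ext ω
        simp only [hG, Finset.prod_range_succ, mul_assoc]
      rw [e]
      refine ⟨?_, ?_⟩
      · have hle := hF_mono _ _ (tau_le_succ ht0 n j)
        have hhm' := hhm.mono hle le_rfl
        refine (i1.mono hle le_rfl).mul (Measurable.ennreal_ofReal ?_)
        exact Real.measurable_exp.comp ((hhm'.mul (hZF n j hj')).sub
          (((hhm'.pow_const 2).mul_const _).div_const 2))
      · rw [exp_step (hF_le _) (hZm n j hj') (hZlaw n j hj') (hZind n j hj') i1 hhm, i2]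
  -- a.s. convergence
  have hSDE' : ∀ᵐ ω ∂P, ∀ n k : ℕ, k ≤ 2 ^ n → X (tau t n k) ω = X 0 ω +
      (∫ s in (0:ℝ)..tau t n k, μ (X s ω)) + W (tau t n k) ω := by
    rw [ae_all_iff]; intro n
    rw [ae_all_iff]; intro k
    by_cases hk : k ≤ 2 ^ n
    · filter_upwards [hSDE _ (htau n k hk)] with ω hω _ using hω
    · exact ae_of_all _ fun ω h' => absurd h' hk
  have hconv : ∀ᵐ ω ∂P, Tendsto (fun n => G n (2 ^ n) ω) atTop
      (nhds (ENNReal.ofReal ((X t ω) ^ (-p) * Real.exp (p * ∫ s in (0:ℝ)..t,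
            (μ (X s ω) / X s ω - (p + 1) / (2 * (X s ω) ^ 2)))))) := by
    filter_upwards [hSDE', ae_all_iff.2 hQV, hXint] with ω h1 h2 h3
    have hsub : Icc 0 t ⊆ Icc 0 T := Icc_subset_Icc_right ht.2
    have hxc : ContinuousOn (fun s => X s ω) (Icc 0 t) := (hXcont ω).mono hsub
    have hwc : ContinuousOn (fun s => W s ω) (Icc 0 t) := (hWcont ω).mono hsub
    have hpos : ∀ s ∈ Icc 0 t, 0 < X s ω := fun s hs => hXpos s (hsub hs) ω
    have hne : ∀ s ∈ Icc 0 t, X s ω ≠ 0 := fun s hs => (hpos s hs).ne'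
    have hm : IntervalIntegrable (fun s => μ (X s ω)) volume 0 t := by
      have h4 := ii_sub hT h3 ⟨le_rfl, hT⟩ ht
      refine (IntervalIntegrable.intervalIntegrable_norm_iff ?_).1 h4
      rw [uIoc_of_le ht0]
      have : AEMeasurable (fun s => X s ω) (volume.restrict (Ioc 0 t)) :=
        (hxc.mono Ioc_subset_Icc_self).aemeasurable measurableSet_Ioc
      exact (hμmeas.comp_aemeasurable this).aestronglyMeasurable
    have hc1 : ContinuousOn (fun s => 1 / X s ω) (Icc 0 t) := continuousOn_const.div hxc hne
    have hc2 : ContinuousOn (fun s => 1 / X s ω ^ 2) (Icc 0 t) :=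
      continuousOn_const.div (hxc.pow 2) fun s hs => pow_ne_zero 2 (hne s hs)
    obtain ⟨L, hL⟩ := isCompact_Icc.exists_bound_of_continuousOn hc2
    obtain ⟨C, hC⟩ := exists_nat_ge L
    have hqv := h2 C
    have hqv' : Tendsto (fun n : ℕ => ∑ k ∈ Finset.range (2 ^ n), (1 / X (tau t n k) ω ^ 2) *
      ((W (tau t n (k+1)) ω - W (tau t n k) ω) ^ 2 - t / 2 ^ n)) atTop (nhds 0) := by
      refine hqv.congr fun n => Finset.sum_congr rfl fun k hk => ?_
      have hk' := Finset.mem_range.1 hk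
      have := hL _ (tau_mem ht0 hk'.le)
      rw [Real.norm_eq_abs] at this
      rw [min_eq_left ((le_abs_self _).trans (this.trans hC)), hvc]
    have hpw := pathwise_s3 ht0 (x := fun s => X s ω) (w := fun s => W s ω)
      (m := fun s => μ (X s ω)) hxc hwc hpos hm h1 hqv'
    have hR2 : Tendsto (fun n : ℕ => ∑ k ∈ Finset.range (2 ^ n),
        1 / X (tau t n k) ω ^ 2 * (t / 2 ^ n)) atTop
        (nhds (∫ s in (0:ℝ)..t, 1 / X s ω ^ 2)) := by
      have := riemann ht0 hc2 (m := fun _ => 1) intervalIntegrable_const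
      simpa [tau_succ_sub] using this
    have hlim := ((hpw.const_mul (-p)).sub (hR2.const_mul (p ^ 2 / 2))).rexp.const_mul
      (X 0 ω ^ (-p))
    have hlim' := ENNReal.tendsto_ofReal hlim
    have hGe : ∀ n, G n (2 ^ n) ω = ENNReal.ofReal (X 0 ω ^ (-p) * Real.exp (-p *
        (∑ k ∈ Finset.range (2 ^ n), (1 / X (tau t n k) ω) *
          (W (tau t n (k+1)) ω - W (tau t n k) ω)) - p ^ 2 / 2 *
          ∑ k ∈ Finset.range (2 ^ n), 1 / X (tau t n k) ω ^ 2 * (t / 2 ^ n))) := by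
      intro n
      rw [ENNReal.ofReal_mul (Real.rpow_nonneg (hXnonneg 0 ω) _)]
      simp only [hG]
      rw [← ENNReal.ofReal_prod_of_nonneg (fun _ _ => (Real.exp_pos _).le), ← Real.exp_sum]
      congr 3
      rw [Finset.mul_sum, Finset.mul_sum, ← Finset.sum_sub_distrib]
      refine Finset.sum_congr rfl fun k _ => ?_
      simp only [hh, hZ, hvc]
      ring
    simp_rw [hGe]
    convert hlim' using 3
    have hi1 : IntervalIntegrable (fun s => 1 / X s ω * μ (X s ω)) volume 0 t :=
      hm.continuousOn_mul (by rwa [uIcc_of_le ht0])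
    have hi2 : IntervalIntegrable (fun s => 1 / X s ω ^ 2) volume 0 t :=
      ContinuousOn.intervalIntegrable (by rwa [uIcc_of_le ht0])
    have hint : ∫ s in (0:ℝ)..t, (μ (X s ω) / X s ω - (p + 1) / (2 * (X s ω) ^ 2)) =
        (∫ s in (0:ℝ)..t, 1 / X s ω * μ (X s ω)) - (p + 1) / 2 *
          ∫ s in (0:ℝ)..t, 1 / X s ω ^ 2 := by
      rw [← intervalIntegral.integral_const_mul, ← intervalIntegral.integral_sub hi1
        (hi2.const_mul _)]
      congr 1
      ext s
      rw [div_eq_mul_one_div (p + 1), one_div_mul_eq_div, ← one_div_mul_one_div]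
      ring
    rw [hint, Real.rpow_def_of_pos (hpos t ⟨ht0, le_rfl⟩),
      Real.rpow_def_of_pos (hpos 0 ⟨le_rfl, ht0⟩), ← Real.exp_add, ← Real.exp_add]
    congr 1
    ring
  calc _ = ∫⁻ ω, liminf (fun n => G n (2 ^ n) ω) atTop ∂P :=
        lintegral_congr_ae (hconv.mono fun ω hω => hω.liminf_eq.symm)
    _ ≤ liminf (fun n => ∫⁻ ω, G n (2 ^ n) ω ∂P) atTop :=
        lintegral_liminf_le fun n => (hexp n _ le_rfl).1.mono (hF_le _) le_rfl
    _ = _ := by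
        simp_rw [fun n => (hexp n _ le_rfl).2]
        simp

end
end
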